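/- arXiv:2110.10244 — 3 statements merged into one kernel-verified Lean document; each statement's English description precedes it below -/
import Mathlib

section
/- Let q_1,...,q_r be quadratic forms on a vector space V over an algebraically closed field of characteristic ≠ 2, such that every nonzero linear combination c_1 q_1 + ... + c_r q_r has rank at least 2r+1. Then the subscheme q_1 = ... = q_r = 0 in V is a normal complete intersection of codimension r. -/
/-!
Write `S = k[x₁, ..., xₙ]` and `I = (q₁, ..., qᵣ)`. Everything rests on one estimate: a prime `P` at
which the `qᵢ` fail the Jacobian criterion has coheight at most `n - r - 2`
(`trdeg_add_le_of_singular`). Indeed, over the fraction field `K` of `S / P` such a `P` gives a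
nonzero vector `a ∈ K ^ r` for which the generic point `x` of `V(P)` lies in the kernel of
`∑ aᵢ Mᵢ`, where `Mᵢ` is the symmetric matrix of `qᵢ`. By the Nullstellensatz the rank hypothesis
persists over `K`, so some `2r + 1` coordinates of `x` are determined rationally by the `aᵢ` and
the other `n - 2r - 1` coordinates. After scaling one `aᵢ` to `1`, the field `K` is generated by
`(r - 1) + (n - 2r - 1) = n - r - 2` elements. Hence the Jacobian criterion holds at every prime of
codimension at most `r + 1` (`jacobian_of_codim_le`).

The primes that matter do have small codimension: `S` is Cohen-Macaulay, so an associated prime of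
`S / (f₁, ..., fₘ)` with `f₁, ..., fₘ` a regular sequence has codimension at most `m`. This
unmixedness statement is `exists_codim`, in which codimension means `n` minus the transcendence
degree of the residue field. After inverting the polynomials in a transcendence basis of residue
coordinates, the prime contains a regular sequence of length its codimension (monic polynomials in
each remaining variable), and Rees' vanishing theorem for `Ext` bounds the depth.

* Regular sequence: if `q_{m+1}` were a zero divisor modulo `q₁, ..., qₘ`, an associated prime
  containing it would have codimension at most `m`; by the Jacobian criterion
  `q₁, ..., q_{m+1}` are independent in the cotangent space there, so that its height is at least
  `m + 1`, a contradiction.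
* Dimension: each member of a regular sequence lowers the dimension by at least one, and Krull's
  height theorem at the origin gives the opposite inequality.
* Normality: let `f / g` be integral over `A = S / I`, with `g` a nonzerodivisor, and suppose
  `f ∉ gA`. An associated prime `P` of `S / (I + (g))` containing the annihilator of `f` has
  codimension at most `r + 1`, so the Jacobian criterion makes the maximal ideal of `A_P`
  principal. In such a local ring every nonzero element is a unit times a power of the uniformizer,
  and an integral fraction with nonzerodivisor denominator lies in the ring; thus `g` divides `f`
  in `A_P`, contradicting the choice of `P`.
-/

open MvPolynomial

/-- The symmetric matrix associated to a quadratic form (characteristic ≠ 2). -/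
noncomputable def assocMatrix {k : Type*} [Field k] {n : ℕ} (q : MvPolynomial (Fin n) k) :
    Matrix (Fin n) (Fin n) k :=
  fun i j => if i = j then q.coeff (Finsupp.single i 2)
  else (2 : k)⁻¹ * q.coeff (Finsupp.single i 1 + Finsupp.single j 1)

/-! ### Regular sequences and associated elements -/

open CategoryTheory Abelian RingTheory.Sequence in
/-- If `Ext^i(N, M)` vanishes for `i ≤ m` and `f₁, ..., fₘ` is `M`-regular, then
`Hom(N, M / (f₁, ..., fₘ)M) = 0`: each `fᵢ` costs one degree of vanishing, by the long exact
sequence. -/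
theorem subsingleton_hom_quotient_of_ext {R : Type u} [CommRing R] (N : ModuleCat.{u} R)
    (fs : List R) (M : ModuleCat.{u} R) (hfs : IsWeaklyRegular M fs)
    (hext : ∀ i < fs.length + 1, Subsingleton (Ext N M i)) :
    Subsingleton (N →ₗ[R] M ⧸ (Ideal.ofList fs • ⊤ : Submodule R M)) := by
  induction fs generalizing M with
  | nil =>
    have h0 := hext 0 (by simp)
    have : Subsingleton (N →ₗ[R] M) :=
      (Ext.addEquiv₀.trans ModuleCat.homAddEquiv).symm.subsingleton
    have e : (M ⧸ (Ideal.ofList ([] : List R) • ⊤ : Submodule R M)) ≃ₗ[R] M :=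
      Submodule.quotEquivOfEqBot _ (by simp)
    exact ⟨fun a b => LinearMap.ext fun x => e.injective (LinearMap.congr_fun
      (Subsingleton.elim (e.toLinearMap ∘ₗ a) (e.toLinearMap ∘ₗ b)) x)⟩
  | cons a fs ih =>
    rw [isWeaklyRegular_cons_iff] at hfs
    have h1 : ∀ i < fs.length + 1,
        Subsingleton (Ext N (ModuleCat.of R (QuotSMulTop a M)) i) := by
      intro i hi
      have zero1 := AddCommGrpCat.isZero_of_iff_subsingleton.mpr
        (hext i (by simp only [List.length_cons]; omega))
      have zero2 := AddCommGrpCat.isZero_of_iff_subsingleton.mpr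
        (hext (i + 1) (by simp only [List.length_cons]; omega))
      exact AddCommGrpCat.subsingleton_of_isZero <| ShortComplex.Exact.isZero_of_both_zeros
        ((Ext.covariant_sequence_exact₃' N hfs.1.smulShortComplex_shortExact) i (i + 1) rfl)
        (zero1.eq_zero_of_src _) (zero2.eq_zero_of_tgt _)
    have h2 := ih (ModuleCat.of R (QuotSMulTop a M)) hfs.2 h1
    let e := Submodule.quotOfListConsSMulTopEquivQuotSMulTopInner M a fs
    exact ⟨fun a b => LinearMap.ext fun x => e.injective (LinearMap.congr_fun
      (Subsingleton.elim (e.toLinearMap ∘ₗ a) (e.toLinearMap ∘ₗ b)) x)⟩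

open RingTheory.Sequence in
/-- If a proper ideal `Q` contains a regular sequence longer than the regular sequence `fs`, then
no nonzero element of `R / (fs)` is annihilated by `Q`. This combines Rees' theorem with
`subsingleton_hom_quotient_of_ext` for `N = R / Q`. -/
theorem eq_zero_of_annihilated {R : Type u} [CommRing R] [IsNoetherianRing R] (Q : Ideal R)
    (hQ : Q ≠ ⊤) (ps fs : List R) (hps : IsWeaklyRegular R ps) (hpsQ : ∀ p ∈ ps, p ∈ Q)
    (hfs : IsWeaklyRegular R fs) (hlen : fs.length < ps.length)
    (u : R) (hu : ∀ y ∈ Q, y * u ∈ Ideal.ofList fs) :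
    u ∈ Ideal.ofList fs := by
  have hlt : Q • (⊤ : Submodule R R) < ⊤ := by
    rw [smul_eq_mul, Ideal.mul_top]; exact hQ.lt_top
  have hreg : IsRegular R ps := by
    refine ⟨hps, fun h => hQ (top_le_iff.mp ?_)⟩
    rw [h, smul_eq_mul, Ideal.mul_top, Ideal.ofList, Ideal.span_le]
    exact hpsQ
  have hext := ModuleCat.subsingleton_ext_of_exists_isRegular Q (ModuleCat.of R (R ⧸ Q))
    (by
      have : Module.support R (R ⧸ Q) = PrimeSpectrum.zeroLocus Q := by
        rw [Module.support_eq_zeroLocus, Ideal.annihilator_quotient]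
      exact this.subset) (ModuleCat.of R R) hlt ps hpsQ hreg
  have hsub := subsingleton_hom_quotient_of_ext (ModuleCat.of R (R ⧸ Q)) fs (ModuleCat.of R R) hfs
    (fun i hi => hext i (by omega))
  let φ : (R ⧸ Q) →ₗ[R] R ⧸ (Ideal.ofList fs • ⊤ : Submodule R R) :=
    Submodule.liftQ Q (LinearMap.toSpanSingleton R _ (Submodule.Quotient.mk u)) (by
      intro y hy
      rw [LinearMap.mem_ker, LinearMap.toSpanSingleton_apply, ← Submodule.Quotient.mk_smul,
        Submodule.Quotient.mk_eq_zero, smul_eq_mul, smul_eq_mul, Ideal.mul_top]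
      exact hu y hy)
  have h0 : φ = 0 := @Subsingleton.elim _ hsub _ _
  have h1 : φ (Submodule.Quotient.mk 1) = 0 := by rw [h0]; rfl
  have h2 : φ (Submodule.Quotient.mk 1) = Submodule.Quotient.mk u := by
    exact one_smul R (Submodule.Quotient.mk u : R ⧸ (Ideal.ofList fs • ⊤ : Submodule R R))
  rw [h2, Submodule.Quotient.mk_eq_zero, smul_eq_mul, Ideal.mul_top] at h1
  exact h1

/-! ### Regular sequences of polynomials -/

section

open RingTheory.Sequence

theorem exists_isWeaklyRegular_of_ringEquiv {A B : Type*} [CommRing A] [CommRing B] (e : A ≃+* B)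
    (Q : Ideal B) (h : ℕ)
    (H : ∃ ps : List A, ps.length = h ∧ (∀ p ∈ ps, p ∈ Q.comap e) ∧ IsWeaklyRegular A ps) :
    ∃ ps : List B, ps.length = h ∧ (∀ p ∈ ps, p ∈ Q) ∧ IsWeaklyRegular B ps := by
  obtain ⟨ps, hl, hm, hr⟩ := H
  let _ : Algebra A B := (e : A →+* B).toAlgebra
  have : Module.Flat A B := Module.Flat.of_linearEquiv
    (AlgEquiv.ofRingEquiv (f := e) (fun _ => rfl) : A ≃ₐ[A] B).symm.toLinearEquiv
  refine ⟨ps.map (algebraMap A B), by simpa using hl, ?_, hr.of_flat⟩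
  intro p hp
  obtain ⟨a, ha, rfl⟩ := List.mem_map.mp hp
  exact hm a ha

/-- A monic polynomial is a nonzerodivisor modulo any ideal extended from the coefficients, so it
can be appended to a regular sequence of constants. -/
theorem exists_isWeaklyRegular_polynomial {A : Type*} [CommRing A] (Q : Ideal (Polynomial A))
    (h : ℕ) (p : Polynomial A) (hp : p.Monic) (hpQ : p ∈ Q)
    (H : ∃ ps : List A, ps.length = h ∧ (∀ p ∈ ps, p ∈ Q.comap Polynomial.C) ∧
      IsWeaklyRegular A ps) :
    ∃ ps : List (Polynomial A), ps.length = h + 1 ∧ (∀ p ∈ ps, p ∈ Q) ∧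
      IsWeaklyRegular (Polynomial A) ps := by
  obtain ⟨ps, hl, hm, hr⟩ := H
  refine ⟨ps.map (algebraMap A (Polynomial A)) ++ [p], by simp [hl], ?_, ?_⟩
  · intro y hy
    rcases List.mem_append.mp hy with hy | hy
    · obtain ⟨a, ha, rfl⟩ := List.mem_map.mp hy
      exact hm a ha
    · rw [List.mem_singleton.mp hy]; exact hpQ
  · rw [isWeaklyRegular_append_iff, isWeaklyRegular_singleton_iff]
    refine ⟨hr.of_flat, ?_⟩
    rw [isSMulRegular_iff_right_eq_zero_of_smul]
    intro y hy
    obtain ⟨f, rfl⟩ := Submodule.Quotient.mk_surjective _ y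
    rw [← Submodule.Quotient.mk_smul, Submodule.Quotient.mk_eq_zero] at hy
    rw [Submodule.Quotient.mk_eq_zero]
    rw [smul_eq_mul, Ideal.mul_top, ← Ideal.map_ofList] at hy ⊢
    rw [smul_eq_mul] at hy
    have hk : ∀ g : Polynomial A, g ∈ Ideal.map (algebraMap A (Polynomial A)) (Ideal.ofList ps) ↔
        g.map (Ideal.Quotient.mk (Ideal.ofList ps)) = 0 := by
      intro g
      rw [← Polynomial.coe_mapRingHom, ← RingHom.mem_ker, Polynomial.ker_mapRingHom,
        Ideal.mk_ker]
      rfl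
    rw [hk] at hy ⊢
    rw [Polynomial.map_mul] at hy
    exact ((hp.map _).mul_right_eq_zero_iff).mp hy

/-- An ideal of a polynomial ring that contains, for each variable, a monic polynomial in that
variable alone contains a regular sequence as long as the number of variables. -/
theorem exists_isWeaklyRegular_mvPolynomial {σ : Type*} [Finite σ] {R : Type*} [CommRing R]
    (Q : Ideal (MvPolynomial σ R))
    (hQ : ∀ i, ∃ p : Polynomial R, p.Monic ∧ Polynomial.aeval (MvPolynomial.X i) p ∈ Q) :
    ∃ ps : List (MvPolynomial σ R), ps.length = Nat.card σ ∧ (∀ p ∈ ps, p ∈ Q) ∧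
      IsWeaklyRegular (MvPolynomial σ R) ps := by
  induction σ using Finite.induction_empty_option with
  | of_equiv e ih =>
    refine exists_isWeaklyRegular_of_ringEquiv (MvPolynomial.renameEquiv R e).toRingEquiv Q _ ?_
    rw [← Nat.card_congr e]
    apply ih
    intro i
    obtain ⟨p, hp, h⟩ := hQ (e i)
    refine ⟨p, hp, ?_⟩
    rw [Ideal.mem_comap]
    have : (MvPolynomial.renameEquiv R e) (Polynomial.aeval (MvPolynomial.X i) p) =
        Polynomial.aeval (MvPolynomial.X (e i)) p := by
      rw [← Polynomial.aeval_algHom_apply]; simp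
    exact this ▸ h
  | h_empty => exact ⟨[], by simp, by simp, IsWeaklyRegular.nil _ _⟩
  | h_option ih =>
    rename_i α _
    refine exists_isWeaklyRegular_of_ringEquiv
      (MvPolynomial.optionEquivLeft R α).symm.toRingEquiv Q _ ?_
    rw [Finite.card_option]
    obtain ⟨p, hp, h⟩ := hQ none
    refine exists_isWeaklyRegular_polynomial _ _ (p.map MvPolynomial.C) (hp.map _) ?_ (ih _ ?_)
    · rw [Ideal.mem_comap]
      have : (MvPolynomial.optionEquivLeft R α).symm (p.map MvPolynomial.C) =
          Polynomial.aeval (MvPolynomial.X none) p := by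
        rw [AlgEquiv.symm_apply_eq, ← Polynomial.aeval_algHom_apply]
        rw [MvPolynomial.optionEquivLeft_X_none, Polynomial.aeval_X_left_eq_map]
        rfl
      exact this ▸ h
    · intro i
      obtain ⟨p, hp, h⟩ := hQ (some i)
      refine ⟨p, hp, ?_⟩
      rw [Ideal.mem_comap, Ideal.mem_comap]
      have : (MvPolynomial.optionEquivLeft R α).symm
          (Polynomial.C (Polynomial.aeval (MvPolynomial.X i) p)) =
          Polynomial.aeval (MvPolynomial.X (some i)) p := by
        rw [AlgEquiv.symm_apply_eq, ← Polynomial.aeval_algHom_apply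
          (MvPolynomial.optionEquivLeft R α), MvPolynomial.optionEquivLeft_X_some]
        exact (Polynomial.aeval_algebraMap_apply _ _ p).symm
      exact this ▸ h

end

/-! ### Unmixedness of polynomial rings -/

section

open RingTheory.Sequence

/-- Let the prime `Q` of `D[σ]` meet `D` trivially, with every variable algebraic over `D` modulo
`Q`. Then `Q` has height at most `#σ`, and `Q` is the annihilator of an element of `D[σ] / (fs)`,
with `fs` regular, only if `fs` has at least `#σ` members. Both are proved in `Frac(D)[σ]`. -/
theorem height_le_and_unmixed_of_algebraic {D σ : Type*} [CommRing D] [IsDomain D]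
    [IsNoetherianRing D] [Finite σ] (Q : Ideal (MvPolynomial σ D)) [Q.IsPrime]
    (hQD : ∀ d : D, MvPolynomial.C d ∈ Q → d = 0)
    (halg : ∀ i, ∃ p : Polynomial D, p ≠ 0 ∧ Polynomial.aeval (MvPolynomial.X i) p ∈ Q) :
    Q.height ≤ Nat.card σ ∧
    ∀ fs : List (MvPolynomial σ D), IsWeaklyRegular (MvPolynomial σ D) fs →
      ∀ u ∉ Ideal.ofList fs, (∀ y, y ∈ Q ↔ y * u ∈ Ideal.ofList fs) → Nat.card σ ≤ fs.length := by
  set K := FractionRing D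
  set M : Submonoid (MvPolynomial σ D) :=
    Submonoid.map (MvPolynomial.C : D →+* MvPolynomial σ D) (nonZeroDivisors D) with hM
  let _ : Algebra (MvPolynomial σ D) (MvPolynomial σ K) := MvPolynomial.algebraMvPolynomial
  have hloc : IsLocalization M (MvPolynomial σ K) := MvPolynomial.isLocalization _ K
  have hdisj : Disjoint (M : Set (MvPolynomial σ D)) (Q : Set (MvPolynomial σ D)) := by
    rw [Set.disjoint_left]
    rintro _ ⟨d, hd, rfl⟩ hdQ
    exact nonZeroDivisors.ne_zero hd (hQD d hdQ)
  have hprime := IsLocalization.isPrime_of_isPrime_disjoint M (MvPolynomial σ K) Q ‹_› hdisj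
  have halgmap : algebraMap (MvPolynomial σ D) (MvPolynomial σ K) =
    MvPolynomial.map (algebraMap D K) := rfl
  constructor
  · rw [← IsLocalization.height_map_of_disjoint (S := MvPolynomial σ K) M Q hdisj]
    have := Ideal.height_le_ringKrullDim_of_ne_top hprime.ne_top
    rw [MvPolynomial.ringKrullDim_of_isNoetherianRing, ringKrullDim_eq_zero_of_field,
      zero_add] at this
    exact_mod_cast this
  · intro fs hfs u hu hann
    -- over the field `K` the algebraic relations of the variables can be made monic
    obtain ⟨ps, hl, hm, hr⟩ := exists_isWeaklyRegular_mvPolynomial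
      (Q.map (algebraMap (MvPolynomial σ D) (MvPolynomial σ K))) (fun i => by
        obtain ⟨p, hp, h⟩ := halg i
        have hp' : p.map (algebraMap D K) ≠ 0 := by
          rwa [Ne, Polynomial.map_eq_zero_iff (IsFractionRing.injective D K)]
        refine ⟨_, Polynomial.monic_mul_leadingCoeff_inv hp', ?_⟩
        rw [map_mul]
        refine Ideal.mul_mem_right _ _ ?_
        have : Polynomial.aeval (MvPolynomial.X i : MvPolynomial σ K) (p.map (algebraMap D K)) =
            algebraMap (MvPolynomial σ D) (MvPolynomial σ K)
              (Polynomial.aeval (MvPolynomial.X i) p) := by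
          rw [Polynomial.aeval_map_algebraMap, halgmap,
            Polynomial.aeval_def, Polynomial.aeval_def, Polynomial.hom_eval₂, MvPolynomial.map_X]
          congr 1
          ext d
          simp [MvPolynomial.algebraMap_apply]
        rw [this]
        exact Ideal.mem_map_of_mem _ h)
    by_contra hlt
    rw [not_le, ← hl] at hlt
    have key := eq_zero_of_annihilated _ hprime.ne_top ps
      (fs.map (algebraMap (MvPolynomial σ D) (MvPolynomial σ K))) hr hm
      (hfs.of_isLocalization _ M) (by simpa using hlt)
      (algebraMap (MvPolynomial σ D) (MvPolynomial σ K) u) (by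
        rw [← Ideal.map_ofList]
        intro y hy
        refine Submodule.span_induction (p := fun y _ => y * _ ∈ _) ?_ ?_ ?_ ?_ hy
        · rintro _ ⟨z, hz, rfl⟩
          rw [← map_mul]
          exact Ideal.mem_map_of_mem _ ((hann z).mp hz)
        · rw [zero_mul]; exact zero_mem _
        · intro a b _ _ ha hb
          rw [add_mul]; exact add_mem ha hb
        · intro a b _ hb
          rw [smul_eq_mul, mul_assoc]; exact Ideal.mul_mem_left _ _ hb)
    rw [← Ideal.map_ofList, IsLocalization.algebraMap_mem_map_algebraMap_iff M] at key
    obtain ⟨m, hmM, hmu⟩ := key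
    exact Set.disjoint_left.mp hdisj hmM ((hann m).mpr hmu)

/-- The codimension `h = n - trdeg (S / P)` of a prime `P` of `S = k[x₁, ..., xₙ]` bounds its
height from above, and `P` is an associated prime of `S / (fs)` with `fs` a regular sequence only
if `fs` has at least `h` members. -/
theorem exists_codim {k : Type*} [Field k] {n : ℕ} (P : Ideal (MvPolynomial (Fin n) k))
    [P.IsPrime] :
    ∃ h : ℕ, Algebra.trdeg k (MvPolynomial (Fin n) k ⧸ P) + h = n ∧ P.height ≤ h ∧
    ∀ fs : List (MvPolynomial (Fin n) k), IsWeaklyRegular (MvPolynomial (Fin n) k) fs →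
      ∀ u ∉ Ideal.ofList fs, (∀ y, y ∈ P ↔ y * u ∈ Ideal.ofList fs) → h ≤ fs.length := by
  classical
  set x : Fin n → MvPolynomial (Fin n) k ⧸ P := fun i => Ideal.Quotient.mk P (MvPolynomial.X i)
    with hx
  have hsurj : Function.Surjective (MvPolynomial.aeval x : MvPolynomial (Fin n) k →ₐ[k] _) := by
    intro y
    obtain ⟨f, rfl⟩ := Ideal.Quotient.mk_surjective y
    refine ⟨f, ?_⟩
    have : MvPolynomial.aeval x = Ideal.Quotient.mkₐ k P := by ext i; simp [hx]
    rw [this]; rfl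
  have htop : Algebra.adjoin k (Set.range x) = ⊤ := by
    rw [Algebra.adjoin_range_eq_range_aeval]
    exact (AlgHom.range_eq_top _).mpr hsurj
  have : Algebra.IsAlgebraic (Algebra.adjoin k (Set.range x)) (MvPolynomial (Fin n) k ⧸ P) :=
    ⟨fun y => isAlgebraic_algebraMap
      (⟨y, htop ▸ Algebra.mem_top⟩ : Algebra.adjoin k (Set.range x))⟩
  -- a transcendence basis among the residue coordinates, indexed by `T`; then `E` regards `S` as
  -- polynomials in the other variables over `k[xᵢ : i ∈ T]`
  obtain ⟨t, ht, hbt⟩ := exists_isTranscendenceBasis_subset (R := k) (Set.range x)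
  obtain ⟨T, -, hT⟩ := Set.SurjOn.exists_bijOn_subset (f := x) (s := Set.univ) (t := t)
    (by rw [Set.SurjOn, Set.image_univ]; exact ht)
  have hb : IsTranscendenceBasis k (fun i : T => x i) :=
    (isTranscendenceBasis_equiv (hT.equiv x) (f := ((↑) : t → MvPolynomial (Fin n) k ⧸ P))).mpr hbt
  let e : ↥Tᶜ ⊕ ↥T ≃ Fin n := (Equiv.sumComm _ _).trans (Equiv.Set.sumCompl T)
  let E : MvPolynomial (Fin n) k ≃ₐ[k] MvPolynomial ↥Tᶜ (MvPolynomial T k) :=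
    (MvPolynomial.renameEquiv k e.symm).trans (MvPolynomial.sumAlgEquiv k _ _)
  let φ : MvPolynomial ↥Tᶜ (MvPolynomial T k) →ₐ[k] MvPolynomial (Fin n) k ⧸ P :=
    (Ideal.Quotient.mkₐ k P).comp E.symm.toAlgHom
  have hφC : ∀ d, φ (MvPolynomial.C d) = MvPolynomial.aeval (fun i : T => x i) d := by
    intro d
    have : φ.comp (IsScalarTower.toAlgHom k (MvPolynomial T k) _) =
        MvPolynomial.aeval (fun i : T => x i) := by
      ext i
      simp [φ, E, e, hx]
    exact DFunLike.congr_fun this d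
  have hφX : ∀ i, φ (MvPolynomial.X i) = x i := by
    intro i
    simp [φ, E, e, hx]
  have hmem : ∀ y, y ∈ P.comap E.symm ↔ φ y = 0 := by
    intro y
    rw [Ideal.mem_comap]
    exact Ideal.Quotient.eq_zero_iff_mem.symm
  have main := height_le_and_unmixed_of_algebraic (P.comap E.symm)
    (by
      intro d hd
      rw [hmem, hφC] at hd
      exact hb.1.eq_zero_of_aeval_eq_zero d hd)
    (by
      intro i
      obtain ⟨p, hp, h⟩ := hb.isAlgebraic.isAlgebraic (x i)
      refine ⟨p.map (hb.1.aevalEquiv.symm : _ →+* _), ?_, ?_⟩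
      · rwa [Ne, Polynomial.map_eq_zero_iff hb.1.aevalEquiv.symm.injective]
      · rw [hmem]
        change (φ : MvPolynomial ↥Tᶜ (MvPolynomial T k) →+* MvPolynomial (Fin n) k ⧸ P) _ = 0
        rw [Polynomial.aeval_def, Polynomial.hom_eval₂, Polynomial.eval₂_map, ← h,
          Polynomial.aeval_def]
        congr 1
        · ext a
          have := hφC (hb.1.aevalEquiv.symm a)
          refine this.trans ?_
          rw [← hb.1.algebraMap_aevalEquiv, AlgEquiv.apply_symm_apply]
        · exact hφX i)
  refine ⟨Nat.card ↥Tᶜ, ?_, ?_, ?_⟩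
  · have h1 : Finite t := Finite.of_equiv T (hT.equiv x)
    rw [← hbt.cardinalMk_eq_trdeg, ← Nat.cast_card, ← Nat.card_congr (hT.equiv x)]
    have h2 : Nat.card T + Nat.card ↥Tᶜ = n := by
      rw [← Nat.card_sum, Nat.card_congr (Equiv.Set.sumCompl T), Nat.card_fin]
    exact_mod_cast h2
  · refine le_trans (le_of_eq ?_) main.1
    exact (RingEquiv.height_comap E.symm.toRingEquiv P).symm
  · intro fs hfs u hu hann
    let _ : Algebra (MvPolynomial (Fin n) k) (MvPolynomial ↥Tᶜ (MvPolynomial T k)) :=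
      (E.toRingEquiv : _ →+* _).toAlgebra
    have : Module.Flat (MvPolynomial (Fin n) k) (MvPolynomial ↥Tᶜ (MvPolynomial T k)) :=
      Module.Flat.of_linearEquiv
      (AlgEquiv.ofRingEquiv (f := E.toRingEquiv) (fun _ => rfl) :
        MvPolynomial (Fin n) k ≃ₐ[MvPolynomial (Fin n) k] _).symm.toLinearEquiv
    have hmap : ∀ y, y ∈ Ideal.ofList (fs.map (algebraMap (MvPolynomial (Fin n) k)
        (MvPolynomial ↥Tᶜ (MvPolynomial T k)))) ↔ E.symm y ∈ Ideal.ofList fs := by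
      intro y
      rw [← Ideal.map_ofList, ← Ideal.mem_comap]
      exact iff_of_eq (congrArg (y ∈ ·) (Ideal.map_comap_of_equiv E.toRingEquiv))
    have := main.2 _ (hfs.of_flat) (E u) (by rwa [hmap, AlgEquiv.symm_apply_apply]) (by
      intro y
      rw [hmap, map_mul, AlgEquiv.symm_apply_apply, ← hann]
      rfl)
    simpa using this

end

/-! ### Pencils of symmetric matrices over extension fields -/

theorem exists_linearIndependent_rows {F ι κ : Type*} [Field F] [Fintype ι] [Fintype κ]
    (M : Matrix ι κ F) (G : ℕ) (h : G ≤ M.rank) :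
    ∃ R : Fin G → ι, LinearIndependent F (M.submatrix R id).row := by
  obtain ⟨κ', a, ha, hsp, hli⟩ := exists_linearIndependent' F M.row
  have : Finite κ' := Finite.of_injective a ha
  have := Fintype.ofFinite κ'
  have h1 : M.rank = Fintype.card κ' := by
    rw [Matrix.rank_eq_finrank_span_row, ← hsp, finrank_span_eq_card hli]
  rw [h1] at h
  obtain ⟨f⟩ : Nonempty (Fin G ↪ κ') :=
    Function.Embedding.nonempty_of_card_le (by simpa using h)
  exact ⟨a ∘ f, hli.comp f f.injective⟩

theorem exists_minor_ne_zero {F : Type*} [Field F] {n : ℕ} (M : Matrix (Fin n) (Fin n) F) (G : ℕ)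
    (h : G ≤ M.rank) : ∃ R C : Fin G → Fin n, (M.submatrix R C).det ≠ 0 := by
  obtain ⟨R, hR⟩ := exists_linearIndependent_rows M G h
  have h1 : G ≤ (M.submatrix R id).transpose.rank := by
    rw [Matrix.rank_transpose, hR.rank_matrix, Fintype.card_fin]
  obtain ⟨C, hC⟩ := exists_linearIndependent_rows _ G h1
  refine ⟨R, C, ?_⟩
  rw [Matrix.linearIndependent_rows_iff_isUnit, Matrix.isUnit_iff_isUnit_det] at hC
  have := hC.ne_zero
  rw [← Matrix.det_transpose]
  exact this

/-- Minors of the generic combination `∑ Xᵢ Mᵢ` specialise to minors of `∑ bᵢ Mᵢ`. -/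
theorem aeval_det_generic {k L : Type*} [Field k] [Field L] [Algebra k L] {n r G : ℕ}
    (M : Fin r → Matrix (Fin n) (Fin n) k) (b : Fin r → L) (R C : Fin G → Fin n) :
    MvPolynomial.aeval b (((∑ i, (MvPolynomial.X i : MvPolynomial (Fin r) k) •
      (M i).map MvPolynomial.C).submatrix R C).det) =
    ((∑ i, b i • (M i).map (algebraMap k L)).submatrix R C).det := by
  rw [AlgHom.map_det]
  congr 1
  ext x y
  simp [Matrix.sum_apply]

/-- If every nonzero `k`-combination of the `Mᵢ` has rank at least `G`, then so has every nonzero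
combination over an extension `K`. As `k` is algebraically closed, the Nullstellensatz shows
that the ideal of `G × G` minors of the generic combination contains a power of each variable. -/
theorem exists_minor_ne_zero_of_extension {k K : Type*} [Field k] [IsAlgClosed k] [Field K]
    [Algebra k K] {n r G : ℕ} (M : Fin r → Matrix (Fin n) (Fin n) k)
    (hM : ∀ c : Fin r → k, c ≠ 0 → G ≤ (∑ i, c i • M i).rank) (a : Fin r → K) (ha : a ≠ 0) :
    ∃ R C : Fin G → Fin n,
      ((∑ i, a i • (M i).map (algebraMap k K)).submatrix R C).det ≠ 0 := by
  by_contra! hcon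
  let I : Ideal (MvPolynomial (Fin r) k) := Ideal.span
    (Set.range fun RC : (Fin G → Fin n) × (Fin G → Fin n) =>
      ((∑ i, (MvPolynomial.X i : MvPolynomial (Fin r) k) •
      (M i).map MvPolynomial.C).submatrix RC.1 RC.2).det)
  have hI : ∀ p ∈ I, MvPolynomial.aeval a p = 0 := by
    intro p hp
    have : I ≤ RingHom.ker (MvPolynomial.aeval a : MvPolynomial (Fin r) k →ₐ[k] K) := by
      rw [Ideal.span_le]
      rintro _ ⟨RC, rfl⟩
      exact (aeval_det_generic M a RC.1 RC.2).trans (hcon _ _)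
    exact this hp
  obtain ⟨i, hi⟩ := Function.ne_iff.mp ha
  have hX : (MvPolynomial.X i : MvPolynomial (Fin r) k) ∈ I.radical := by
    rw [← MvPolynomial.vanishingIdeal_zeroLocus_eq_radical (K := k),
      MvPolynomial.mem_vanishingIdeal_iff]
    intro c hc
    rw [MvPolynomial.aeval_X]
    by_contra hci
    have hc0 : c ≠ 0 := fun h => hci (by rw [h]; rfl)
    obtain ⟨R, C, hRC⟩ := exists_minor_ne_zero _ G (hM c hc0)
    refine hRC ?_
    have := hc _ (Ideal.subset_span ⟨(R, C), rfl⟩)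
    rw [aeval_det_generic] at this
    simpa using this
  obtain ⟨m, hm⟩ := hX
  have := hI _ hm
  rw [map_pow, MvPolynomial.aeval_X] at this
  exact hi (eq_zero_of_pow_eq_zero this)

/-- Cramer's rule over a subfield `F`: if `N x = 0` with `N` defined over `F` and a minor of `N` on
the columns `C` is nonzero, then the coordinates of `x` outside `C` generate those in `C`
over `F`. -/
theorem mem_of_mulVec_eq_zero {k K : Type*} [Field k] [Field K] [Algebra k K] {n G : ℕ}
    (F : IntermediateField k K) (N : Matrix (Fin n) (Fin n) K) (hN : ∀ i j, N i j ∈ F)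
    (x : Fin n → K) (hx : N.mulVec x = 0) (R C : Fin G → Fin n)
    (hdet : (N.submatrix R C).det ≠ 0) (hxF : ∀ j ∉ Set.range C, x j ∈ F) (j : Fin n) :
    x j ∈ F := by
  classical
  by_cases hj : j ∈ Set.range C
  swap
  · exact hxF j hj
  obtain ⟨g, rfl⟩ := hj
  have hC : Function.Injective C := by
    intro a b hab
    by_contra hne
    exact hdet (Matrix.det_zero_of_column_eq hne fun i => by simp [hab])
  let B' : Matrix (Fin G) (Fin G) F := fun a b => ⟨N (R a) (C b), hN _ _⟩
  have hB : N.submatrix R C = B'.map (algebraMap F K) := rfl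
  -- the right-hand side after moving the columns outside `C` across
  let w : Fin G → F := fun a => -∑ j ∈ (Finset.univ.image C)ᶜ.attach,
    ⟨N (R a) j * x j, mul_mem (hN _ _) (hxF j (by
      intro hm
      refine Finset.mem_compl.mp j.2 ?_
      obtain ⟨g, hg⟩ := hm
      exact Finset.mem_image.mpr ⟨g, Finset.mem_univ _, hg⟩))⟩
  have hw : (N.submatrix R C).mulVec (x ∘ C) = fun a => algebraMap F K (w a) := by
    ext a
    have h1 : ∑ j, N (R a) j * x j = 0 := congrFun hx (R a)
    rw [← Finset.sum_add_sum_compl (Finset.univ.image C),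
      Finset.sum_image (fun _ _ _ _ h => hC h), add_eq_zero_iff_eq_neg] at h1
    refine h1.trans ?_
    rw [map_neg, map_sum, ← Finset.sum_attach]
    rfl
  have h2 : (N.submatrix R C).det • (x ∘ C) =
      (N.submatrix R C).adjugate.mulVec (fun a => algebraMap F K (w a)) := by
    rw [← hw, Matrix.mulVec_mulVec, Matrix.adjugate_mul, Matrix.smul_mulVec, Matrix.one_mulVec]
  have h3 : x (C g) = algebraMap F K (B'.det⁻¹ * B'.adjugate.mulVec w g) := by
    have h4 := congrFun h2 g
    rw [Pi.smul_apply, smul_eq_mul, Function.comp_apply] at h4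
    rw [← mul_right_inj' hdet, h4, hB, ← RingHom.mapMatrix_apply, ← RingHom.map_adjugate,
      ← RingHom.map_det, map_mul, map_inv₀, mul_inv_cancel_left₀]
    · simp [Matrix.mulVec, dotProduct]
    · rw [RingHom.map_det]; exact hdet
  rw [h3]
  exact (B'.det⁻¹ * B'.adjugate.mulVec w g).2

theorem pderiv_eq_of_isHomogeneous_two {k : Type*} [Field k] (h2 : (2 : k) ≠ 0) {n : ℕ}
    (q : MvPolynomial (Fin n) k) (hq : q.IsHomogeneous 2) (j : Fin n) :
    MvPolynomial.pderiv j q =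
      MvPolynomial.C 2 * ∑ l, MvPolynomial.C (assocMatrix q j l) * MvPolynomial.X l := by
  have hd : (MvPolynomial.pderiv j q).IsHomogeneous 1 := hq.pderiv
  have hr : (MvPolynomial.C 2 * ∑ l, MvPolynomial.C (assocMatrix q j l) *
      MvPolynomial.X l).IsHomogeneous 1 :=
    (MvPolynomial.IsHomogeneous.sum _ _ _ fun l _ =>
      (MvPolynomial.isHomogeneous_X k l).C_mul _).C_mul _
  ext e
  by_cases he : e.degree = 1
  · obtain ⟨l, rfl⟩ : ∃ l, e = Finsupp.single l 1 := by
      have : e ∈ {d : Fin n →₀ ℕ | d.degree = 1} := he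
      rw [← Finsupp.range_single_one] at this
      exact this.imp fun _ h => h.symm
    rw [MvPolynomial.coeff_pderiv, MvPolynomial.coeff_C_mul, MvPolynomial.coeff_sum,
      Finset.sum_eq_single l, MvPolynomial.coeff_C_mul, MvPolynomial.coeff_X, assocMatrix]
    · by_cases hjl : j = l
      · subst hjl
        simp [← Finsupp.single_add]
        ring
      · rw [if_neg hjl]
        simp [h2, Ne.symm hjl, add_comm]
    · intro b _ hb
      rw [MvPolynomial.coeff_C_mul, MvPolynomial.coeff_X, if_neg, mul_zero]
      intro h
      exact hb (Finsupp.single_left_injective one_ne_zero h)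
    · simp
  · rw [hd.coeff_eq_zero he, hr.coeff_eq_zero he]

theorem assocMatrix_sum {k : Type*} [Field k] {n r : ℕ} (q : Fin r → MvPolynomial (Fin n) k)
    (c : Fin r → k) : assocMatrix (∑ i, c i • q i) = ∑ i, c i • assocMatrix (q i) := by
  ext a b
  rw [Matrix.sum_apply]
  simp only [assocMatrix, Matrix.smul_apply, MvPolynomial.coeff_sum, MvPolynomial.coeff_smul,
    smul_eq_mul]
  split_ifs
  · rfl
  · rw [Finset.mul_sum]
    exact Finset.sum_congr rfl fun _ _ => by ring

/-! ### The dimension of the singular locus -/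

/-- A prime `P` at which the Jacobian matrix of the `qᵢ` is degenerate, with `c` a nontrivial
relation between its rows modulo `P`, satisfies `dim S / P ≤ n - r - 2`. The inequality is written
additively and in cardinals. No `qᵢ` is required to lie in `P`. -/
theorem trdeg_add_le_of_singular {k : Type*} [Field k] [IsAlgClosed k] (h2 : (2 : k) ≠ 0)
    {n r : ℕ} (q : Fin r → MvPolynomial (Fin n) k) (hq : ∀ i, (q i).IsHomogeneous 2)
    (hrank : ∀ c : Fin r → k, c ≠ 0 → 2 * r + 1 ≤ (assocMatrix (∑ i, c i • q i)).rank)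
    (P : Ideal (MvPolynomial (Fin n) k)) [P.IsPrime] (c : Fin r → MvPolynomial (Fin n) k)
    (hc : ∃ i, c i ∉ P) (hsing : ∀ j, ∑ i, c i * MvPolynomial.pderiv j (q i) ∈ P) :
    Algebra.trdeg k (MvPolynomial (Fin n) k ⧸ P) + (r + 2 : ℕ) ≤ n := by
  classical
  let A := MvPolynomial (Fin n) k ⧸ P
  let K := FractionRing A
  let ψ : MvPolynomial (Fin n) k →ₐ[k] K :=
    (IsScalarTower.toAlgHom k A K).comp (Ideal.Quotient.mkₐ k P)
  have hψ : ∀ f, ψ f = 0 ↔ f ∈ P := by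
    intro f
    rw [← Ideal.Quotient.eq_zero_iff_mem]
    exact IsFractionRing.to_map_eq_zero_iff (R := A) (K := K)
  obtain ⟨i₀, hi₀⟩ := hc
  have hc0 : ψ (c i₀) ≠ 0 := fun h => hi₀ ((hψ _).mp h)
  -- the relation as a vector over `K`, normalised at `i₀`; `x` is the generic point of `V(P)`
  let a : Fin r → K := fun i => ψ (c i) / ψ (c i₀)
  have ha0 : a i₀ = 1 := div_self hc0
  have ha : a ≠ 0 := fun h => one_ne_zero (ha0.symm.trans (congrFun h i₀))
  let x : Fin n → K := fun j => ψ (MvPolynomial.X j)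
  let N : Matrix (Fin n) (Fin n) K := ∑ i, a i • (assocMatrix (q i)).map (algebraMap k K)
  have hN : N.mulVec x = 0 := by
    ext j
    have h := (hψ _).mpr (hsing j)
    rw [map_sum] at h
    have h3 : (ψ (c i₀) * 2) * (N.mulVec x j) = 0 := by
      rw [← h]
      simp only [N, Matrix.sum_mulVec, Finset.sum_apply, Finset.mul_sum, Matrix.smul_mulVec,
        Pi.smul_apply, smul_eq_mul]
      refine Finset.sum_congr rfl fun i _ => ?_
      rw [pderiv_eq_of_isHomogeneous_two h2 _ (hq i), map_mul, map_mul, map_sum,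
        Matrix.mulVec, dotProduct]
      have : ψ (MvPolynomial.C 2) = 2 := by
        rw [← MvPolynomial.algebraMap_eq, AlgHom.commutes, map_ofNat]
      rw [this, ← div_mul_cancel₀ (ψ (c i)) hc0]
      have : ∀ l, ψ (MvPolynomial.C (assocMatrix (q i) j l) * MvPolynomial.X l) =
          (assocMatrix (q i)).map (algebraMap k K) j l * x l := by
        intro l
        rw [map_mul, ← MvPolynomial.algebraMap_eq, AlgHom.commutes]
        rfl
      simp only [this]
      ring
    have h2K : (2 : K) ≠ 0 := by
      have := (map_ne_zero (algebraMap k K)).mpr h2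
      rwa [map_ofNat] at this
    exact (mul_eq_zero.mp h3).resolve_left (mul_ne_zero hc0 h2K)
  obtain ⟨R, C, hRC⟩ := exists_minor_ne_zero_of_extension (G := 2 * r + 1)
    (fun i => assocMatrix (q i))
    (fun c hc => by rw [← assocMatrix_sum]; exact hrank c hc) a ha
  have hC : Function.Injective C := by
    intro a b hab
    by_contra hne
    exact hRC (Matrix.det_zero_of_column_eq hne fun i => by simp [hab])
  -- the `n - r - 2` generators of `K`: the `aᵢ` with `i ≠ i₀`, and the coordinates of `x` outside
  -- the columns of the nonzero minor
  let s : Finset K := (Finset.univ.erase i₀).image a ∪ (Finset.univ.image C)ᶜ.image x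
  have hcard : s.card + (r + 2) ≤ n := by
    have h1 : s.card ≤ (r - 1) + (n - (2 * r + 1)) := by
      refine (Finset.card_union_le _ _).trans (add_le_add ?_ ?_)
      · refine Finset.card_image_le.trans ?_
        rw [Finset.card_erase_of_mem (Finset.mem_univ _), Finset.card_univ, Fintype.card_fin]
      · refine Finset.card_image_le.trans ?_
        rw [Finset.card_compl, Finset.card_image_of_injective _ hC, Finset.card_univ,
          Fintype.card_fin, Fintype.card_fin]
    have h3 : 2 * r + 1 ≤ n := by
      simpa using Fintype.card_le_of_injective C hC
    have h4 : 0 < r := i₀.pos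
    omega
  let F : IntermediateField k K := IntermediateField.adjoin k (s : Set K)
  have haF : ∀ i, a i ∈ F := by
    intro i
    by_cases hi : i = i₀
    · rw [hi, ha0]; exact one_mem _
    · refine IntermediateField.subset_adjoin k _ (Finset.mem_coe.mpr ?_)
      exact Finset.mem_union_left _ (Finset.mem_image_of_mem _ (by simpa using hi))
  have hxF : ∀ j, x j ∈ F := by
    refine mem_of_mulVec_eq_zero F N ?_ x hN R C hRC ?_
    · intro i j
      simp only [N, Matrix.sum_apply, Matrix.smul_apply, smul_eq_mul]
      exact sum_mem fun l _ => mul_mem (haF l) (F.algebraMap_mem _)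
    · intro j hj
      refine IntermediateField.subset_adjoin k _ (Finset.mem_coe.mpr ?_)
      exact Finset.mem_union_right _ (Finset.mem_image_of_mem _ (by simpa using hj))
  have hψF : ∀ f, ψ f ∈ F := by
    intro f
    induction f using MvPolynomial.induction_on with
    | C b => rw [← MvPolynomial.algebraMap_eq, AlgHom.commutes]; exact F.algebraMap_mem _
    | add f g hf hg => rw [map_add]; exact add_mem hf hg
    | mul_X f j hf => rw [map_mul]; exact mul_mem hf (hxF j)
  have hF : ∀ y : K, y ∈ F := by
    intro y
    obtain ⟨f, g, -, rfl⟩ := IsFractionRing.div_surjective (A := A) y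
    obtain ⟨f, rfl⟩ := Ideal.Quotient.mk_surjective f
    obtain ⟨g, rfl⟩ := Ideal.Quotient.mk_surjective g
    exact div_mem (hψF f) (hψF g)
  have halg : Algebra.IsAlgebraic (Algebra.adjoin k (s : Set K)) K := by
    constructor
    intro y
    obtain ⟨u, hu, v, hv, rfl⟩ := IntermediateField.mem_adjoin_iff_div.mp (hF y)
    rw [div_eq_mul_inv]
    exact (isAlgebraic_algebraMap (⟨u, hu⟩ : Algebra.adjoin k (s : Set K))).mul
      (isAlgebraic_algebraMap (⟨v, hv⟩ : Algebra.adjoin k (s : Set K))).inv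
  have h5 : Algebra.trdeg k A ≤ Algebra.trdeg k K :=
    trdeg_le_of_injective (IsScalarTower.toAlgHom k A K)
      (IsFractionRing.injective A K)
  have h6 : Algebra.trdeg k K ≤ s.card := by
    exact (Algebra.IsAlgebraic.trdeg_le_cardinalMk k (s : Set K)).trans Cardinal.mk_coe_finset.le
  calc Algebra.trdeg k A + (r + 2 : ℕ) ≤ s.card + (r + 2 : ℕ) := by
        gcongr
        exact h5.trans h6
    _ ≤ n := by exact_mod_cast hcard

/-! ### The Jacobian criterion -/

open IsLocalRing in
theorem linearIndependent_toCotangent {T ι : Type*} [CommRing T] [IsLocalRing T] [Fintype ι]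
    (f : ι → T) (hf : ∀ i, f i ∈ maximalIdeal T)
    (h : ∀ c : ι → T, ∑ i, c i * f i ∈ maximalIdeal T ^ 2 → ∀ i, c i ∈ maximalIdeal T) :
    LinearIndependent (ResidueField T)
      (fun i => ((maximalIdeal T).toCotangent ⟨f i, hf i⟩ : CotangentSpace T)) := by
  rw [Fintype.linearIndependent_iff]
  intro g hg i
  choose c hc using fun i => residue_surjective (R := T) (g i)
  rw [← hc i, residue_eq_zero_iff]
  refine h c ?_ i
  have h1 : (maximalIdeal T).toCotangent (∑ i, c i • ⟨f i, hf i⟩) = 0 := by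
    rw [map_sum, ← hg]
    refine Finset.sum_congr rfl fun i _ => ?_
    rw [map_smul, ← hc i]
    rfl
  rw [Ideal.toCotangent_eq_zero] at h1
  simpa using h1

open IsLocalRing in
/-- If the classes of the `fᵢ` span a subspace of codimension at most one in the cotangent space,
then one more generator `π` suffices for the maximal ideal, by Nakayama's lemma. -/
theorem exists_maximalIdeal_eq {T ι : Type*} [CommRing T] [IsLocalRing T] [IsNoetherianRing T]
    [Fintype ι] (f : ι → T) (hf : ∀ i, f i ∈ maximalIdeal T)
    (h : ∀ c : ι → T, ∑ i, c i * f i ∈ maximalIdeal T ^ 2 → ∀ i, c i ∈ maximalIdeal T)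
    (hdim : Module.finrank (ResidueField T) (CotangentSpace T) ≤ Fintype.card ι + 1) :
    ∃ π : T, maximalIdeal T = Ideal.span (Set.range f) ⊔ Ideal.span {π} := by
  have hli := linearIndependent_toCotangent f hf h
  set v : ι → CotangentSpace T := fun i => (maximalIdeal T).toCotangent ⟨f i, hf i⟩ with hv
  set W := Submodule.span (ResidueField T) (Set.range v) with hW
  have h1 : Module.finrank (ResidueField T) (CotangentSpace T ⧸ W) ≤ 1 := by
    have h2 := W.finrank_quotient_add_finrank
    rw [hW, finrank_span_eq_card hli, ← hW] at h2
    omega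
  obtain ⟨p, hp⟩ := finrank_le_one_iff.mp h1
  obtain ⟨p, rfl⟩ := W.mkQ_surjective p
  obtain ⟨⟨π, hπ⟩, rfl⟩ := (maximalIdeal T).toCotangent_surjective p
  refine ⟨π, le_antisymm ?_ ?_⟩
  swap
  · rw [sup_le_iff, Ideal.span_le, Ideal.span_singleton_le_iff_mem]
    exact ⟨by rintro _ ⟨i, rfl⟩; exact hf i, hπ⟩
  refine Submodule.le_of_le_smul_of_le_jacobson_bot (I := maximalIdeal T)
    (IsNoetherian.noetherian _) (IsLocalRing.maximalIdeal_le_jacobson _) ?_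
  intro y hy
  obtain ⟨c, hc⟩ := hp (W.mkQ ((maximalIdeal T).toCotangent ⟨y, hy⟩))
  rw [← map_smul, Submodule.mkQ_apply, Submodule.mkQ_apply, eq_comm, Submodule.Quotient.eq, hW,
    Submodule.mem_span_range_iff_exists_fun] at hc
  obtain ⟨b, hb⟩ := hc
  obtain ⟨c, rfl⟩ := residue_surjective c
  choose b' hb' using fun i => residue_surjective (R := T) (b i)
  have h3 : (maximalIdeal T).toCotangent (∑ i, b' i • ⟨f i, hf i⟩) =
      (maximalIdeal T).toCotangent (⟨y, hy⟩ - c • ⟨π, hπ⟩) := by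
    rw [map_sum, map_sub, map_smul]
    refine Eq.trans ?_ hb
    refine Finset.sum_congr rfl fun i _ => ?_
    rw [map_smul, ← hb' i]
    rfl
  rw [eq_comm, Ideal.toCotangent_eq] at h3
  have h4 : y = (∑ i, b' i * f i + c * π) + (y - c * π - ∑ i, b' i * f i) := by ring
  rw [h4]
  refine add_mem (Ideal.mem_sup_left (add_mem (Ideal.mem_sup_left (sum_mem fun i _ =>
    Ideal.mul_mem_left _ _ (Ideal.subset_span ⟨i, rfl⟩))) (Ideal.mem_sup_right
    (Ideal.mul_mem_left _ _ (Ideal.mem_span_singleton_self _))))) (Ideal.mem_sup_right ?_)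
  rw [smul_eq_mul, ← pow_two]
  simpa using h3

/-- The Jacobian criterion: if the rows of the Jacobian matrix of the `fᵢ ∈ P` are independent
modulo `P`, then the `fᵢ` are independent in the cotangent space of `S_P`. A relation
`∑ cᵢ fᵢ ∈ P²` becomes `∑ cᵢ ∂ⱼ fᵢ ∈ P` on differentiation. -/
theorem mem_maximalIdeal_of_jacobian {k ι : Type*} [Field k] {n : ℕ} [Fintype ι]
    (P : Ideal (MvPolynomial (Fin n) k)) [P.IsPrime] (f : ι → MvPolynomial (Fin n) k)
    (hf : ∀ i, f i ∈ P)
    (hns : ∀ c : ι → MvPolynomial (Fin n) k,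
      (∀ j, ∑ i, c i * MvPolynomial.pderiv j (f i) ∈ P) → ∀ i, c i ∈ P)
    (c : ι → Localization.AtPrime P)
    (hc : ∑ i, c i * algebraMap _ (Localization.AtPrime P) (f i) ∈
      IsLocalRing.maximalIdeal (Localization.AtPrime P) ^ 2) (i : ι) :
    c i ∈ IsLocalRing.maximalIdeal (Localization.AtPrime P) := by
  obtain ⟨b, hb⟩ := IsLocalization.exist_integer_multiples_of_finite P.primeCompl c
  choose c' hc' using hb
  have h1 : algebraMap _ (Localization.AtPrime P) (∑ i, c' i * f i) ∈
      Ideal.map (algebraMap _ (Localization.AtPrime P)) (P ^ 2) := by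
    rw [Ideal.map_pow, Localization.AtPrime.map_eq_maximalIdeal]
    have : algebraMap _ (Localization.AtPrime P) (∑ i, c' i * f i) =
        (b : MvPolynomial (Fin n) k) • ∑ i, c i * algebraMap _ (Localization.AtPrime P) (f i) := by
      rw [map_sum, Finset.smul_sum]
      refine Finset.sum_congr rfl fun i _ => ?_
      rw [map_mul, hc', smul_mul_assoc]
    rw [this, Algebra.smul_def]
    exact Ideal.mul_mem_left _ _ hc
  rw [IsLocalization.algebraMap_mem_map_algebraMap_iff P.primeCompl] at h1
  obtain ⟨s, hs, hsP⟩ := h1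
  have hD : ∀ j, ∀ y ∈ P ^ 2, MvPolynomial.pderiv j y ∈ P := by
    intro j y hy
    rw [pow_two] at hy
    refine Submodule.mul_induction_on hy ?_ ?_
    · intro a ha b hb
      rw [Derivation.leibniz, smul_eq_mul, smul_eq_mul]
      exact add_mem (Ideal.mul_mem_right _ _ ha) (Ideal.mul_mem_right _ _ hb)
    · intro a b ha hb
      rw [map_add]; exact add_mem ha hb
  have h2 := hns (fun i => s * c' i) (by
    intro j
    have h3 := hD j _ hsP
    have h4 : MvPolynomial.pderiv j (s * ∑ i, c' i * f i) =
        ∑ i, s * c' i * MvPolynomial.pderiv j (f i) +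
        ∑ i, MvPolynomial.pderiv j (s * c' i) * f i := by
      rw [Finset.mul_sum, map_sum, ← Finset.sum_add_distrib]
      refine Finset.sum_congr rfl fun i _ => ?_
      rw [← mul_assoc, Derivation.leibniz, smul_eq_mul, smul_eq_mul]
      ring
    rw [h4] at h3
    exact (Ideal.add_mem_iff_left _ (sum_mem fun i _ => Ideal.mul_mem_left _ _ (hf i))).mp h3) i
  have h3 : c' i ∈ P := (Ideal.IsPrime.mem_or_mem ‹_› h2).resolve_left hs
  have h4 : algebraMap _ (Localization.AtPrime P) (c' i) ∈
      IsLocalRing.maximalIdeal (Localization.AtPrime P) :=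
    (IsLocalization.AtPrime.to_map_mem_maximal_iff _ P _).mpr h3
  rw [hc', Algebra.smul_def] at h4
  refine (Ideal.IsPrime.mem_or_mem inferInstance h4).resolve_left ?_
  rw [IsLocalization.AtPrime.to_map_mem_maximal_iff _ P]
  exact b.2

/-- `S_P` is a regular local ring. -/
theorem finrank_cotangentSpace_eq_height {k : Type*} [Field k] {n : ℕ}
    (P : Ideal (MvPolynomial (Fin n) k)) [P.IsPrime] :
    (Module.finrank (IsLocalRing.ResidueField (Localization.AtPrime P))
      (IsLocalRing.CotangentSpace (Localization.AtPrime P)) : ℕ∞) = P.height := by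
  have h1 := (IsRegularLocalRing.iff_finrank_cotangentSpace (Localization.AtPrime P)).mp
    inferInstance
  rw [IsLocalization.AtPrime.ringKrullDim_eq_height P] at h1
  exact_mod_cast h1

theorem card_le_height_of_jacobian {k ι : Type*} [Field k] {n : ℕ} [Fintype ι]
    (P : Ideal (MvPolynomial (Fin n) k)) [P.IsPrime] (f : ι → MvPolynomial (Fin n) k)
    (hf : ∀ i, f i ∈ P)
    (hns : ∀ c : ι → MvPolynomial (Fin n) k,
      (∀ j, ∑ i, c i * MvPolynomial.pderiv j (f i) ∈ P) → ∀ i, c i ∈ P) :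
    (Fintype.card ι : ℕ∞) ≤ P.height := by
  rw [← finrank_cotangentSpace_eq_height]
  exact_mod_cast (linearIndependent_toCotangent
    (fun i => algebraMap _ (Localization.AtPrime P) (f i))
    (fun i => (IsLocalization.AtPrime.to_map_mem_maximal_iff _ P _).mpr (hf i))
    (mem_maximalIdeal_of_jacobian P f hf hns)).fintype_card_le_finrank

/-- If the Jacobian criterion holds at `P` and the height of `P` exceeds the number of equations by
at most one, then the maximal ideal of the local ring of `V(f)` at `P` is principal. -/
theorem exists_maximalIdeal_eq_of_jacobian {k ι : Type*} [Field k] {n : ℕ} [Fintype ι]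
    (P : Ideal (MvPolynomial (Fin n) k)) [P.IsPrime] (f : ι → MvPolynomial (Fin n) k)
    (hf : ∀ i, f i ∈ P)
    (hns : ∀ c : ι → MvPolynomial (Fin n) k,
      (∀ j, ∑ i, c i * MvPolynomial.pderiv j (f i) ∈ P) → ∀ i, c i ∈ P)
    (hht : P.height ≤ (Fintype.card ι + 1 : ℕ)) :
    ∃ π : Localization.AtPrime P, IsLocalRing.maximalIdeal (Localization.AtPrime P) =
      Ideal.map (algebraMap _ (Localization.AtPrime P)) (Ideal.span (Set.range f)) ⊔
        Ideal.span {π} := by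
  rw [Ideal.map_span, ← Set.range_comp]
  refine exists_maximalIdeal_eq _
    (fun i => (IsLocalization.AtPrime.to_map_mem_maximal_iff _ P _).mpr (hf i))
    (mem_maximalIdeal_of_jacobian P f hf hns) ?_
  rw [← finrank_cotangentSpace_eq_height] at hht
  exact_mod_cast hht

/-! ### Complete intersection -/

section

open RingTheory.Sequence

/-- The `qᵢ` satisfy the Jacobian criterion at every prime of codimension at most `r + 1`. -/
theorem jacobian_of_codim_le {k : Type*} [Field k] [IsAlgClosed k] (h2 : (2 : k) ≠ 0)
    {n r : ℕ} (q : Fin r → MvPolynomial (Fin n) k) (hq : ∀ i, (q i).IsHomogeneous 2)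
    (hrank : ∀ c : Fin r → k, c ≠ 0 → 2 * r + 1 ≤ (assocMatrix (∑ i, c i • q i)).rank)
    (P : Ideal (MvPolynomial (Fin n) k)) [P.IsPrime] {h : ℕ}
    (hcodim : Algebra.trdeg k (MvPolynomial (Fin n) k ⧸ P) + h = n) (hle : h ≤ r + 1)
    (c : Fin r → MvPolynomial (Fin n) k)
    (hsing : ∀ j, ∑ i, c i * MvPolynomial.pderiv j (q i) ∈ P) (i : Fin r) : c i ∈ P := by
  by_contra hc
  have h1 := trdeg_add_le_of_singular h2 q hq hrank P c ⟨i, hc⟩ hsing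
  have hfin : Algebra.trdeg k (MvPolynomial (Fin n) k ⧸ P) < Cardinal.aleph0 :=
    lt_of_le_of_lt (self_le_add_right _ _) (hcodim ▸ Cardinal.natCast_lt_aleph0)
  obtain ⟨d, hd⟩ := Cardinal.lt_aleph0.mp hfin
  rw [hd] at h1 hcodim
  norm_cast at h1 hcodim
  omega

/-- Every nonzero element `u` of `R / I` has its annihilator contained in an associated prime
`P = ann v` of `R / I`. Here `u` and `v` are represented by elements of `R`. -/
theorem exists_annihilator_prime {R : Type*} [CommRing R] [IsNoetherianRing R] (I : Ideal R)
    (u : R) (hu : u ∉ I) :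
    ∃ (P : Ideal R) (v : R), P.IsPrime ∧ v ∉ I ∧ (∀ y, y ∈ P ↔ y * v ∈ I) ∧
      ∀ y, y * u ∈ I → y ∈ P := by
  obtain ⟨P, hP, hle⟩ := exists_le_isAssociatedPrime_of_isNoetherianRing R
    (Ideal.Quotient.mk I u) (by rwa [Ne, Ideal.Quotient.eq_zero_iff_mem])
  obtain ⟨hPp, v, hv⟩ := isAssociatedPrime_iff.mp hP
  obtain ⟨v, rfl⟩ := Ideal.Quotient.mk_surjective v
  have key : ∀ y, y ∈ P ↔ y * v ∈ I := by
    intro y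
    rw [hv, Submodule.mem_colon_singleton, Submodule.mem_bot, ← Ideal.Quotient.eq_zero_iff_mem]
    rfl
  refine ⟨P, v, hPp, fun h => hPp.ne_top ((Ideal.eq_top_iff_one _).mpr ((key 1).mpr (by simpa))),
    key, fun y hy => hle ?_⟩
  rw [Submodule.mem_colon_singleton, Submodule.mem_bot]
  exact Ideal.Quotient.eq_zero_iff_mem.mpr hy

theorem isWeaklyRegular_concat_iff {R : Type*} [CommRing R] (fs : List R) (g : R) :
    IsWeaklyRegular R (fs ++ [g]) ↔
      IsWeaklyRegular R fs ∧ ∀ u, g * u ∈ Ideal.ofList fs → u ∈ Ideal.ofList fs := by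
  rw [isWeaklyRegular_append_iff, isWeaklyRegular_singleton_iff,
    isSMulRegular_iff_right_eq_zero_of_smul]
  refine and_congr_right fun _ => ⟨fun H u hu => ?_, fun H y hy => ?_⟩
  · have := H (Submodule.Quotient.mk u) (by
      rw [← Submodule.Quotient.mk_smul, Submodule.Quotient.mk_eq_zero, smul_eq_mul,
        smul_eq_mul, Ideal.mul_top]
      exact hu)
    rwa [Submodule.Quotient.mk_eq_zero, smul_eq_mul, Ideal.mul_top] at this
  · obtain ⟨f, rfl⟩ := Submodule.Quotient.mk_surjective _ y
    rw [← Submodule.Quotient.mk_smul, Submodule.Quotient.mk_eq_zero, smul_eq_mul,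
        smul_eq_mul, Ideal.mul_top] at hy
    rw [Submodule.Quotient.mk_eq_zero, smul_eq_mul, Ideal.mul_top]
    exact H f hy

theorem ofList_ofFn {R : Type*} [CommRing R] {r : ℕ} (q : Fin r → R) :
    Ideal.ofList (List.ofFn q) = Ideal.span (Set.range q) := by
  rw [Ideal.ofList]
  congr 1
  ext x
  simp [List.mem_ofFn]

theorem isWeaklyRegular_of_rank {k : Type*} [Field k] [IsAlgClosed k] (h2 : (2 : k) ≠ 0)
    {n r : ℕ} (q : Fin r → MvPolynomial (Fin n) k) (hq : ∀ i, (q i).IsHomogeneous 2)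
    (hrank : ∀ c : Fin r → k, c ≠ 0 → 2 * r + 1 ≤ (assocMatrix (∑ i, c i • q i)).rank) :
    IsWeaklyRegular (MvPolynomial (Fin n) k) (List.ofFn q) := by
  have key : ∀ m (hm : m ≤ r), IsWeaklyRegular (MvPolynomial (Fin n) k)
      (List.ofFn fun i : Fin m => q (i.castLE hm)) := by
    intro m
    induction m with
    | zero => intro _; rw [List.ofFn_zero]; exact IsWeaklyRegular.nil _ _
    | succ m ih =>
      intro hm
      have hreg := ih (by omega)
      rw [List.ofFn_succ', List.concat_eq_append, isWeaklyRegular_concat_iff]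
      refine ⟨hreg, fun u hu => ?_⟩
      by_contra hun
      obtain ⟨P, v, hP, hv, hPv, hPu⟩ := exists_annihilator_prime _ u hun
      obtain ⟨h, hcodim, hht, hunm⟩ := exists_codim P
      have hhm : h ≤ m := by simpa using hunm _ hreg v hv hPv
      have hmem : ∀ i : Fin (m + 1), q (i.castLE hm) ∈ P := by
        intro i
        refine Fin.lastCases (hPu _ hu) (fun i => ?_) i
        rw [hPv]
        exact Ideal.mul_mem_right _ _ (Ideal.subset_span (List.mem_ofFn.mpr ⟨i, rfl⟩))
      have := card_le_height_of_jacobian P _ hmem (by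
        intro c hc i
        -- extend the relation by zero to all of the `q i`
        have h3 := jacobian_of_codim_le h2 q hq hrank P hcodim (by omega)
          (fun i => if hi : i.1 < m + 1 then c ⟨i, hi⟩ else 0) (by
            intro j
            convert hc j using 1
            symm
            refine Finset.sum_of_injOn (Fin.castLE hm) (Fin.castLE_injective hm).injOn
              (by simp) ?_ ?_
            · intro i _ hi
              rw [dif_neg, zero_mul]
              intro hlt
              exact hi ⟨⟨i, hlt⟩, by simp, rfl⟩
            · intro i _
              simp [i.is_le]) (i.castLE hm)
        simpa [i.is_le] using h3)
      have h4 := this.trans hht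
      rw [Fintype.card_fin] at h4
      norm_cast at h4
      omega
  exact key r le_rfl

end

/-! ### Local rings with principal maximal ideal and dimension -/

theorem exists_eq_pow_mul_unit {B : Type*} [CommRing B] [IsLocalRing B] [IsNoetherianRing B]
    {π : B} (hπ : IsLocalRing.maximalIdeal B = Ideal.span {π}) {x : B} (hx : x ≠ 0) :
    ∃ (i : ℕ) (u : B), IsUnit u ∧ x = π ^ i * u := by
  have hfin : FiniteMultiplicity π x := by
    by_contra hinf
    rw [FiniteMultiplicity.not_iff_forall] at hinf
    refine hx ?_
    rw [← Ideal.mem_bot, ← Ideal.iInf_pow_eq_bot_of_isLocalRing (IsLocalRing.maximalIdeal B)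
      Ideal.IsPrime.ne_top', Submodule.mem_iInf]
    intro i
    rw [hπ, Ideal.span_singleton_pow, Ideal.mem_span_singleton]
    exact hinf i
  obtain ⟨u, hu, hdvd⟩ := hfin.exists_eq_pow_mul_and_not_dvd
  refine ⟨_, u, ?_, hu⟩
  by_contra hnu
  rw [← mem_nonunits_iff, ← IsLocalRing.mem_maximalIdeal, hπ, Ideal.mem_span_singleton] at hnu
  exact hdvd hnu

/-- A Noetherian local ring with principal maximal ideal contains every fraction `f / g` integral
over it, for `g` a nonzerodivisor. The polynomial `p.scaleRoots g` is `g ^ deg p * p (x / g)`, so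
that its vanishing at `f` is the integrality equation of `f / g` cleared of denominators. -/
theorem dvd_of_scaleRoots_eval_eq_zero {B : Type*} [CommRing B] [IsLocalRing B]
    [IsNoetherianRing B] {π : B} (hπ : IsLocalRing.maximalIdeal B = Ideal.span {π}) {f g : B}
    (hg : g ∈ nonZeroDivisors B) (p : Polynomial B) (hp : p.Monic)
    (hpf : (p.scaleRoots g).eval f = 0) : g ∣ f := by
  rcases eq_or_ne f 0 with rfl | hf
  · exact dvd_zero g
  obtain ⟨i, u, hu, rfl⟩ := exists_eq_pow_mul_unit hπ (nonZeroDivisors.ne_zero hg)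
  obtain ⟨j, v, hv, rfl⟩ := exists_eq_pow_mul_unit hπ hf
  rcases le_or_gt i j with hij | hij
  · rw [hu.mul_right_dvd, hv.dvd_mul_right]
    exact pow_dvd_pow π hij
  exfalso
  -- `g = f * w` with `w` in the maximal ideal
  obtain ⟨w, hw, hgw⟩ : ∃ w ∈ IsLocalRing.maximalIdeal B, π ^ i * u = (π ^ j * v) * w := by
    refine ⟨π ^ (i - j) * (hv.unit⁻¹ : Bˣ) * u, ?_, ?_⟩
    · rw [hπ, Ideal.mem_span_singleton, mul_assoc]
      exact (dvd_pow_self π (by omega)).mul_right _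
    · have h1 : v * (hv.unit⁻¹ : Bˣ) = 1 := hv.mul_val_inv
      obtain ⟨d, rfl⟩ := Nat.exists_eq_add_of_lt hij
      rw [show j + d + 1 - j = d + 1 by omega]
      linear_combination -(π ^ (j + d + 1) * u) * h1
  have hunit : IsUnit ((p.scaleRoots w).eval 1) := by
    rw [← IsLocalRing.residue_ne_zero_iff_isUnit, Polynomial.eval, Polynomial.hom_eval₂,
      RingHom.comp_id, ← Polynomial.eval_map,
      Polynomial.map_scaleRoots _ _ _ (by rw [hp.leadingCoeff, map_one]; exact one_ne_zero),
      (IsLocalRing.residue_eq_zero_iff w).mpr hw, Polynomial.scaleRoots_zero,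
      (hp.map _).leadingCoeff]
    simp
  have h2 : (π ^ j * v) ^ p.natDegree = 0 := by
    have h3 := Polynomial.scaleRoots_eval_mul (p.scaleRoots w) 1 (π ^ j * v)
    rw [← Polynomial.scaleRoots_mul, mul_one, mul_comm w, ← hgw, hpf,
      Polynomial.natDegree_scaleRoots, eq_comm] at h3
    exact hunit.mul_left_eq_zero.mp h3
  refine nonZeroDivisors.ne_zero (pow_mem hg p.natDegree) ?_
  rw [hgw, mul_pow, h2, zero_mul]

open Module RingTheory.Sequence in
/-- Over a Noetherian ring, not assumed local, a regular sequence lowers the dimension of the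
support by at least its length. The inequality may be strict. -/
theorem supportDim_add_length_le {R M : Type*} [CommRing R] [AddCommGroup M] [Module R M]
    [Module.Finite R M] [IsNoetherianRing R] (rs : List R) (reg : IsWeaklyRegular M rs) :
    supportDim R (M ⧸ Ideal.ofList rs • (⊤ : Submodule R M)) + rs.length ≤ supportDim R M := by
  induction rs generalizing M with
  | nil =>
    rw [Ideal.ofList_nil, Submodule.bot_smul]
    simpa using (supportDim_eq_of_equiv (Submodule.quotEquivOfEqBot ⊥ rfl)).le
  | cons x rs' ih =>
    rw [isWeaklyRegular_cons_iff] at reg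
    rw [supportDim_eq_of_equiv (Submodule.quotOfListConsSMulTopEquivQuotSMulTopInner M x _),
      List.length_cons, Nat.cast_add, Nat.cast_one, ← add_assoc]
    exact (add_le_add_left (ih reg.2) 1).trans
      (supportDim_quotSMulTop_succ_le_of_notMem_minimalPrimes
        fun _ ↦ reg.1.notMem_of_mem_minimalPrimes)

theorem mem_ker_constantCoeff {k : Type*} [Field k] {n : ℕ} {f : MvPolynomial (Fin n) k}
    (hf : f.IsHomogeneous 2) :
    f ∈ RingHom.ker (MvPolynomial.constantCoeff : MvPolynomial (Fin n) k →+* k) := by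
  rw [RingHom.mem_ker, MvPolynomial.constantCoeff_eq]
  exact hf.coeff_eq_zero (by simp)

/-- The maximal ideal of the origin has height at least `n`, by the Jacobian criterion applied to
the coordinates. -/
theorem height_origin {k : Type*} [Field k] (n : ℕ) :
    (n : ℕ∞) ≤
      (RingHom.ker (MvPolynomial.constantCoeff : MvPolynomial (Fin n) k →+* k)).height := by
  have : (RingHom.ker (MvPolynomial.constantCoeff : MvPolynomial (Fin n) k →+* k)).IsPrime :=
    RingHom.ker_isPrime _
  have := card_le_height_of_jacobian
    (RingHom.ker (MvPolynomial.constantCoeff : MvPolynomial (Fin n) k →+* k))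
    (fun i : Fin n => MvPolynomial.X i) (fun i => by simp) (by
      intro c hc i
      have := hc i
      simpa [MvPolynomial.pderiv_X, Pi.single_apply] using this)
  simpa using this

theorem ringKrullDim_of_isWeaklyRegular {k : Type*} [Field k] {n r : ℕ}
    (q : Fin r → MvPolynomial (Fin n) k) (hq : ∀ i, (q i).IsHomogeneous 2)
    (hreg : RingTheory.Sequence.IsWeaklyRegular (MvPolynomial (Fin n) k) (List.ofFn q)) :
    ringKrullDim (MvPolynomial (Fin n) k ⧸ Ideal.span (Set.range q)) = (n - r : ℕ) := by
  have hle : ringKrullDim (MvPolynomial (Fin n) k ⧸ Ideal.span (Set.range q)) + r ≤ n := by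
    have h1 := supportDim_add_length_le _ hreg
    rw [List.length_ofFn, Module.supportDim_self_eq_ringKrullDim,
      MvPolynomial.ringKrullDim_of_isNoetherianRing, ringKrullDim_eq_zero_of_field,
      Nat.card_fin, zero_add, ← ofList_ofFn] at *
    have h2 : Ideal.ofList (List.ofFn q) • (⊤ : Ideal (MvPolynomial (Fin n) k)) =
      Ideal.ofList (List.ofFn q) := by rw [smul_eq_mul, Ideal.mul_top]
    rw [← Module.supportDim_quotient_eq_ringKrullDim]
    rwa [h2] at h1
  have hge : (n : WithBot ℕ∞) ≤
      ringKrullDim (MvPolynomial (Fin n) k ⧸ Ideal.span (Set.range q)) + r := by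
    have : (RingHom.ker (MvPolynomial.constantCoeff : MvPolynomial (Fin n) k →+* k)).IsPrime :=
      RingHom.ker_isPrime _
    have h1 := Ideal.height_le_ringKrullDim_quotient_add_encard
      (p := RingHom.ker (MvPolynomial.constantCoeff : MvPolynomial (Fin n) k →+* k))
      (Set.range q) (by rintro _ ⟨i, rfl⟩; exact mem_ker_constantCoeff (hq i))
    have h2 : ((n : ℕ∞) : WithBot ℕ∞) ≤ _ := (WithBot.coe_le_coe.mpr (height_origin n)).trans h1
    refine le_trans (by exact_mod_cast h2) (add_le_add_right (b := _) ?_ _)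
    have h3 : (Set.range q).encard ≤ r := by
      rw [← Set.image_univ]
      refine (Set.encard_image_le _ _).trans ?_
      simp
    exact_mod_cast h3
  have heq := le_antisymm hle hge
  generalize ringKrullDim (MvPolynomial (Fin n) k ⧸ Ideal.span (Set.range q)) = d at heq
  induction d using WithBot.recBotCoe with
  | bot => simp at heq
  | coe d =>
    induction d using ENat.recTopCoe with
    | top => norm_cast at heq
    | coe d =>
      norm_cast at heq
      rw [← heq, Nat.add_sub_cancel]
      rfl

/-! ### Normality -/

section

open RingTheory.Sequence

/-- If the local ring of `S / I` at `P` has principal maximal ideal, then a fraction `f / g`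
integral over `S / I` lies in that local ring: `s f ∈ I + (g)` for some `s ∉ P`. -/
theorem exists_mul_mem_sup_of_scaleRoots {S : Type*} (T : Type*) [CommRing S] [CommRing T]
    [Algebra S T] (P : Ideal S) [P.IsPrime] [IsLocalization.AtPrime T P] [IsLocalRing T]
    [IsNoetherianRing T] (I : Ideal S) {π : T}
    (hπ : IsLocalRing.maximalIdeal T = Ideal.map (algebraMap S T) I ⊔ Ideal.span {π}) {f g : S}
    (hg : ∀ u, g * u ∈ I → u ∈ I) (p : Polynomial S) (hp : p.Monic)
    (hpf : (p.scaleRoots g).eval f ∈ I) :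
    ∃ s ∉ P, s * f ∈ I ⊔ Ideal.span {g} := by
  set J := Ideal.map (algebraMap S T) I with hJ
  have hJm : J ≤ IsLocalRing.maximalIdeal T := hπ ▸ le_sup_left
  have : Nontrivial (T ⧸ J) := Ideal.Quotient.nontrivial_iff.mpr
    (fun h => Ideal.IsPrime.ne_top' (top_le_iff.mp (h ▸ hJm)))
  have : IsLocalRing (T ⧸ J) := IsLocalRing.of_surjective' _ Ideal.Quotient.mk_surjective
  let φ : S →+* T ⧸ J := (Ideal.Quotient.mk J).comp (algebraMap _ T)
  have hφ : ∀ y, φ y = 0 ↔ ∃ s ∈ P.primeCompl, s * y ∈ I := by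
    intro y
    rw [RingHom.comp_apply, Ideal.Quotient.eq_zero_iff_mem, hJ,
      IsLocalization.algebraMap_mem_map_algebraMap_iff P.primeCompl]
  have hm : IsLocalRing.maximalIdeal (T ⧸ J) = Ideal.span {Ideal.Quotient.mk J π} := by
    have h1 := IsLocalRing.map_maximalIdeal_of_surjective (Ideal.Quotient.mk J)
      Ideal.Quotient.mk_surjective
    rw [← h1, hπ, Ideal.map_sup, Ideal.map_quotient_self, bot_sup_eq, Ideal.map_span,
      Set.image_singleton]
  have hgB : φ g ∈ nonZeroDivisors (T ⧸ J) := by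
    have h1 : ∀ y, φ g * y = 0 → y = 0 := by
      intro y hy
      obtain ⟨y, rfl⟩ := Ideal.Quotient.mk_surjective y
      obtain ⟨a, s, rfl⟩ := IsLocalization.exists_mk'_eq P.primeCompl y
      have hs : IsUnit (φ s) := (IsLocalization.map_units T s).map (Ideal.Quotient.mk J)
      have ha : Ideal.Quotient.mk J (IsLocalization.mk' T a s) * φ s = φ a := by
        rw [RingHom.comp_apply, RingHom.comp_apply, ← map_mul, IsLocalization.mk'_spec]
      have hga : φ (g * a) = 0 := by
        rw [map_mul, ← ha, ← mul_assoc, hy, zero_mul]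
      obtain ⟨t, ht, hta⟩ := (hφ _).mp hga
      rw [← hs.mul_left_eq_zero, ha, hφ]
      exact ⟨t, ht, hg _ (by convert hta using 1; ring)⟩
    exact mem_nonZeroDivisors_iff.mpr ⟨h1, fun y hy => h1 y (by rwa [mul_comm])⟩
  have hdvd := dvd_of_scaleRoots_eval_eq_zero hm (f := φ f) hgB (p.map φ) (hp.map _) (by
    rw [← Polynomial.map_scaleRoots _ _ _ (by rw [hp.leadingCoeff, map_one]; exact one_ne_zero),
      Polynomial.eval_map, Polynomial.eval₂_hom, hφ]
    exact ⟨1, one_mem _, by rwa [one_mul]⟩)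
  have hmem : algebraMap _ T f ∈ Ideal.map (algebraMap _ T)
      (I ⊔ Ideal.span {g}) := by
    obtain ⟨y, hy⟩ := hdvd
    obtain ⟨y, rfl⟩ := Ideal.Quotient.mk_surjective y
    rw [RingHom.comp_apply, RingHom.comp_apply, ← map_mul, Ideal.Quotient.eq] at hy
    rw [Ideal.map_sup, ← hJ, Ideal.map_span, Set.image_singleton,
      ← sub_add_cancel (algebraMap _ T f) (algebraMap _ T g * y)]
    exact add_mem (Ideal.mem_sup_left hy) (Ideal.mem_sup_right
      (Ideal.mul_mem_right _ _ (Ideal.mem_span_singleton_self _)))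
  rw [IsLocalization.algebraMap_mem_map_algebraMap_iff P.primeCompl] at hmem
  obtain ⟨s, hs, hsf⟩ := hmem
  exact ⟨s, hs, hsf⟩

/-- Normality of `S / I` for `I = (q₁, ..., qᵣ)`, stated in `S`: if `g` is a nonzerodivisor modulo
`I` and `f / g` is integral over `S / I`, then `f ∈ I + (g)`. -/
theorem mem_sup_of_scaleRoots {k : Type*} [Field k] [IsAlgClosed k] (h2 : (2 : k) ≠ 0)
    {n r : ℕ} (q : Fin r → MvPolynomial (Fin n) k) (hq : ∀ i, (q i).IsHomogeneous 2)
    (hrank : ∀ c : Fin r → k, c ≠ 0 → 2 * r + 1 ≤ (assocMatrix (∑ i, c i • q i)).rank)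
    {f g : MvPolynomial (Fin n) k}
    (hg : ∀ u, g * u ∈ Ideal.span (Set.range q) → u ∈ Ideal.span (Set.range q))
    (p : Polynomial (MvPolynomial (Fin n) k)) (hp : p.Monic)
    (hpf : (p.scaleRoots g).eval f ∈ Ideal.span (Set.range q)) :
    f ∈ Ideal.span (Set.range q) ⊔ Ideal.span {g} := by
  by_contra hf
  have hI : Ideal.ofList (List.ofFn q ++ [g]) = Ideal.span (Set.range q) ⊔ Ideal.span {g} := by
    rw [Ideal.ofList_append, ofList_ofFn, Ideal.ofList_singleton]
  have hreg : IsWeaklyRegular (MvPolynomial (Fin n) k) (List.ofFn q ++ [g]) := by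
    rw [isWeaklyRegular_concat_iff, ofList_ofFn]
    exact ⟨isWeaklyRegular_of_rank h2 q hq hrank, hg⟩
  rw [← hI] at hf
  obtain ⟨P, v, hP, hv, hPv, hPf⟩ := exists_annihilator_prime _ f hf
  obtain ⟨h, hcodim, hht, hunm⟩ := exists_codim P
  have hh : h ≤ r + 1 := by simpa using hunm _ hreg v hv hPv
  rw [hI] at hPv hPf
  have hIP : Ideal.span (Set.range q) ⊔ Ideal.span {g} ≤ P :=
    fun y hy => (hPv y).mpr (Ideal.mul_mem_right _ _ hy)
  obtain ⟨π, hπ⟩ := exists_maximalIdeal_eq_of_jacobian P q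
    (fun i => hIP (Ideal.mem_sup_left (Ideal.subset_span ⟨i, rfl⟩)))
    (fun c hc i => jacobian_of_codim_le h2 q hq hrank P hcodim hh c hc i)
    (hht.trans (by rw [Fintype.card_fin]; exact_mod_cast hh))
  obtain ⟨s, hs, hsf⟩ :=
    exists_mul_mem_sup_of_scaleRoots (Localization.AtPrime P) P _ hπ hg p hp hpf
  exact hs (hPf s hsf)

theorem isIntegrallyClosed_of_rank {k : Type*} [Field k] [IsAlgClosed k] (h2 : (2 : k) ≠ 0)
    {n r : ℕ} (q : Fin r → MvPolynomial (Fin n) k) (hq : ∀ i, (q i).IsHomogeneous 2)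
    (hrank : ∀ c : Fin r → k, c ≠ 0 → 2 * r + 1 ≤ (assocMatrix (∑ i, c i • q i)).rank) :
    IsIntegrallyClosed (MvPolynomial (Fin n) k ⧸ Ideal.span (Set.range q)) := by
  set I := Ideal.span (Set.range q) with hI
  rw [isIntegrallyClosed_iff (FractionRing (MvPolynomial (Fin n) k ⧸ I))]
  rintro z ⟨p, hp, hpz⟩
  obtain ⟨f, g, rfl⟩ := IsLocalization.exists_mk'_eq
    (nonZeroDivisors (MvPolynomial (Fin n) k ⧸ I)) z
  have h1 := scaleRoots_aeval_eq_zero_of_aeval_mk'_eq_zero (p := p) (r := f) (s := g) hpz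
  rw [Polynomial.aeval_algebraMap_apply, FaithfulSMul.algebraMap_eq_zero_iff,
    Polynomial.coe_aeval_eq_eval] at h1
  obtain ⟨g, hg⟩ := g
  -- lift the numerator, the denominator and the integral equation to `S`
  obtain ⟨f, rfl⟩ := Ideal.Quotient.mk_surjective f
  obtain ⟨g, rfl⟩ := Ideal.Quotient.mk_surjective g
  obtain ⟨p, rfl, -, hp⟩ := Polynomial.lifts_and_natDegree_eq_and_monic
    (f := Ideal.Quotient.mk I) (p := p) (by
      rw [Polynomial.lifts_iff_coeff_lifts]
      exact fun _ => Ideal.Quotient.mk_surjective _) hp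
  have hmem : f ∈ I ⊔ Ideal.span {g} := by
    rcases subsingleton_or_nontrivial (MvPolynomial (Fin n) k ⧸ I) with hs | hs
    · rw [Ideal.Quotient.subsingleton_iff.mp hs]
      simp
    refine mem_sup_of_scaleRoots h2 q hq hrank (fun u hu => ?_) p hp ?_
    · rw [← hI, ← Ideal.Quotient.eq_zero_iff_mem] at hu ⊢
      rw [map_mul] at hu
      exact (mem_nonZeroDivisors_iff.mp hg).1 _ hu
    · rw [← hI, ← Ideal.Quotient.eq_zero_iff_mem, ← Polynomial.eval₂_hom, ← Polynomial.eval_map,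
        Polynomial.map_scaleRoots _ _ _ (by rw [hp.leadingCoeff, map_one]; exact one_ne_zero)]
      exact h1
  obtain ⟨a, ha, b, hb, rfl⟩ := Submodule.mem_sup.mp hmem
  obtain ⟨b, rfl⟩ := Ideal.mem_span_singleton'.mp hb
  refine ⟨Ideal.Quotient.mk I b, ?_⟩
  rw [eq_comm, IsLocalization.mk'_eq_iff_eq_mul, ← map_mul]
  congr 1
  rw [← map_mul, Ideal.Quotient.eq, add_sub_cancel_right]
  exact ha

end

/-- Let `q 1, ..., q r` be quadratic forms over an algebraically closed field of
characteristic ≠ 2 such that every nonzero linear combination has rank at least `2r+1`.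
Then the subscheme `q 1 = ... = q r = 0` is a normal complete intersection of
codimension `r`: the `q i` form a regular sequence, the quotient ring has Krull
dimension `n - r`, and the quotient ring is normal (integrally closed). -/
theorem quadrics_normal_complete_intersection {k : Type*} [Field k] [IsAlgClosed k]
    (hchar : ringChar k ≠ 2) {n r : ℕ} (q : Fin r → MvPolynomial (Fin n) k)
    (hq : ∀ i, (q i).IsHomogeneous 2)
    (hrank : ∀ c : Fin r → k, c ≠ 0 → 2 * r + 1 ≤ (assocMatrix (∑ i, c i • q i)).rank) :
    RingTheory.Sequence.IsRegular (MvPolynomial (Fin n) k) (List.ofFn q) ∧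
    ringKrullDim (MvPolynomial (Fin n) k ⧸ Ideal.span (Set.range q)) = (n - r : ℕ) ∧
    IsIntegrallyClosed (MvPolynomial (Fin n) k ⧸ Ideal.span (Set.range q)) := by
  have h2 : (2 : k) ≠ 0 := Ring.two_ne_zero hchar
  have hreg := isWeaklyRegular_of_rank h2 q hq hrank
  refine ⟨⟨hreg, fun htop => ?_⟩, ringKrullDim_of_isWeaklyRegular q hq hreg,
    isIntegrallyClosed_of_rank h2 q hq hrank⟩
  have hle : Ideal.span (Set.range q) ≤
      RingHom.ker (MvPolynomial.constantCoeff : MvPolynomial (Fin n) k →+* k) := by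
    rw [Ideal.span_le]
    rintro _ ⟨i, rfl⟩
    exact mem_ker_constantCoeff (hq i)
  rw [smul_eq_mul, Ideal.mul_top, ofList_ofFn] at htop
  exact RingHom.ker_ne_top _ (top_le_iff.mp (htop.symm ▸ hle))
end

section
/- Let E/k be a finite Galois extension with group G, char(k) ≠ 2, V_0 a finite-dimensional k-vector space, V = V_0 ⊗_k E. If q is a quadratic form on V such that rk(σ(q) − q) ≤ r for all σ ∈ G, then there exists a quadratic form q_0 on V_0 with rk_E(q − q_0) ≤ 2r(2 + (r+1)^{r+1}). -/
/-!
Over a field of characteristic different from `2` it is enough to approximate `M` by an arbitrary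
matrix `A` over `k`: symmetrising `A` at most doubles the rank of the error. The matrix `A` is
obtained by looking at the graph `W ⊆ Eⁿ × Eⁿ` of `M`. The Galois group acts semilinearly on
`Eⁿ × Eⁿ`, the subspace `σ W` is the graph of `σ(M)`, and the hypothesis says that `W` is almost
invariant: `dim (W + σ W) ≤ dim W + r`.

An almost invariant subspace is close to an invariant one, with bounds that do not involve the
order of the group (`exists_invariant`). The argument takes place in a lattice with a
modular dimension function. For `K ≤ W` let `e(K)` be the maximum over `h` of
`dim (K + h W) - dim W`. If some intersection of `K` with at most `r + 1` of its translates has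
smaller `e`, replace `K` by that intersection; this happens at most `r` times, and each time the
codimension of `K` in `W` stays under control (`codim_inf_le`). Otherwise the sum `N` of all
translates of `K` is invariant and satisfies `dim (N + W) ≤ dim W + r`
(`exists_invariant_of_stable`).

Finally, an invariant subspace `N` is spanned by its `k`-rational vectors, by taking traces
(`exists_linearMap_of_invariant`). Hence there is a linear map over `k` whose graph over the
projection of `N` is contained in `N`. It differs from `M` by a map of rank at most
`r (r + 2) ^ r` (`rank_sub_le_of_graph`), which is below the required bound.
-/

/-! ### Almost invariant elements of a modular lattice -/

/-- A dimension function on a lattice: a strictly monotone map to `ℕ` satisfying the dimension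
formula for joins and meets, as `Module.finrank` does on the subspaces of a finite-dimensional
vector space. -/
structure IsDimension {L : Type*} [Lattice L] (d : L → ℕ) : Prop where
  strictMono : StrictMono d
  modular : ∀ x y, d (x ⊔ y) + d (x ⊓ y) = d x + d y

section Lattice

variable {L G : Type*} [Lattice L] [BoundedOrder L] {d : L → ℕ}

/-- If the join of all `x g` raises the dimension of `W` by `m`, then at most `m` of the `x g`
already do: add them one at a time, each time choosing one that is not yet below the join. -/
theorem exists_small_sup (hd : IsDimension d) [Fintype G] (x : G → L) (W : L) (m : ℕ)
    (h : d W + m ≤ d (W ⊔ Finset.univ.sup x)) :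
    ∃ S : Finset G, S.card ≤ m ∧ d W + m ≤ d (W ⊔ S.sup x) := by
  classical
  induction m with
  | zero => exact ⟨∅, by simp, by simp⟩
  | succ m ih =>
    obtain ⟨S, hS, hSd⟩ := ih (by omega)
    by_cases hlt : d W + (m + 1) ≤ d (W ⊔ S.sup x)
    · exact ⟨S, by omega, hlt⟩
    obtain ⟨g, hg⟩ : ∃ g, ¬ x g ≤ W ⊔ S.sup x := by
      by_contra! hall
      have : W ⊔ Finset.univ.sup x ≤ W ⊔ S.sup x :=
        sup_le le_sup_left (Finset.sup_le fun g _ => hall g)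
      have := hd.strictMono.monotone this
      omega
    refine ⟨insert g S, (Finset.card_insert_le _ _).trans (by omega), ?_⟩
    have hsub : W ⊔ S.sup x < W ⊔ (insert g S).sup x := by
      rw [Finset.sup_insert]
      refine lt_of_le_not_ge (sup_le_sup_left le_sup_right _) fun hle => hg ?_
      exact (le_sup_left.trans le_sup_right).trans hle
    have := hd.strictMono hsub
    omega

/-- The case in which intersecting `K` with at most `r + 1` translates does not decrease the excess
`e` of `K` over the translates of `W`. The invariant element is the join of all translates of `K`.
Were its excess over `W` more than `r`, the same would hold for some `r + 1` translates; by
stability their join lies below `W ⊔ ρ h W` for a single `h`, which has excess at most `r`. -/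
theorem exists_invariant_of_stable (hd : IsDimension d) [Group G] [Fintype G] (ρ : G → L ≃o L)
    (hρ : ∀ g h x, ρ (g * h) x = ρ g (ρ h x)) (hdρ : ∀ g x, d (ρ g x) = d x)
    {W : L} {r : ℕ} (hW : ∀ g, d (W ⊔ ρ g W) ≤ d W + r) {e : ℕ} {K : L} (hK : K ≤ W)
    (hKe : ∀ g, d (K ⊔ ρ g W) ≤ d W + e)
    (hstab : ∀ S : Finset G, S.card ≤ r + 1 →
      ∃ h, d W + e ≤ d ((K ⊓ S.inf fun g => ρ g K) ⊔ ρ h W)) :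
    ∃ N, K ≤ N ∧ (∀ g, ρ g N = N) ∧ d (N ⊔ W) ≤ d W + r := by
  have hmono := hd.strictMono.monotone
  refine ⟨Finset.univ.sup fun g => ρ g K, ?_, fun g => ?_, ?_⟩
  · have h1 : ρ 1 K = K := (ρ 1).injective (by rw [← hρ, one_mul])
    calc K = ρ 1 K := h1.symm
      _ ≤ _ := Finset.le_sup (f := fun g => ρ g K) (Finset.mem_univ 1)
  · rw [map_finset_sup]
    refine le_antisymm (Finset.sup_le fun h _ => ?_) (Finset.sup_le fun h _ => ?_)
    · simp only [Function.comp, ← hρ]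
      exact Finset.le_sup (f := fun g => ρ g K) (Finset.mem_univ _)
    · have := Finset.le_sup (f := ⇑(ρ g) ∘ fun g => ρ g K) (Finset.mem_univ (g⁻¹ * h))
      simpa only [Function.comp, ← hρ, mul_inv_cancel_left] using this
  · by_contra! hlt
    obtain ⟨S, hS, hSd⟩ := exists_small_sup hd (fun g => ρ g K) W (r + 1)
      (by rw [sup_comm] at hlt; omega)
    obtain ⟨h, hh⟩ := hstab S hS
    -- The meet `K'` of `K` with the translates in `S` has the same join with `ρ h W` as each of
    -- these translates: it is smaller, but the dimensions agree.
    have hle : ∀ g ∈ S, ρ g K ≤ (K ⊓ S.inf fun g => ρ g K) ⊔ ρ h W := fun g hg => by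
      have hle' : (K ⊓ S.inf fun g => ρ g K) ⊔ ρ h W ≤ ρ g K ⊔ ρ h W :=
        sup_le_sup_right (inf_le_right.trans (Finset.inf_le hg)) _
      have hdle : d (ρ g K ⊔ ρ h W) ≤ d W + e := by
        have : ρ g K ⊔ ρ h W = ρ g (K ⊔ ρ (g⁻¹ * h) W) := by
          rw [map_sup, ← hρ, mul_inv_cancel_left]
        rw [this, hdρ]
        exact hKe _
      have heq : (K ⊓ S.inf fun g => ρ g K) ⊔ ρ h W = ρ g K ⊔ ρ h W := by
        by_contra hne
        have := hd.strictMono (lt_of_le_of_ne hle' hne)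
        omega
      rw [heq]
      exact le_sup_left
    have : W ⊔ S.sup (fun g => ρ g K) ≤ W ⊔ ρ h W :=
      sup_le le_sup_left <| (Finset.sup_le hle).trans <|
        sup_le_sup_right (inf_le_left.trans hK) _
    have := hmono this
    have := hW h
    omega

/-- If `K` has codimension at most `r * (t - 1)` in `W`, then its meet with `|S|` translates has
codimension at most `r * (t * (|S| + 1) - 1)`. The term `r` is added on the left to avoid the
subtraction. -/
theorem codim_inf_le (hd : IsDimension d) (ρ : G → L ≃o L) (hdρ : ∀ g x, d (ρ g x) = d x)
    {W : L} {r : ℕ} (hW : ∀ g, d (W ⊔ ρ g W) ≤ d W + r) {K : L} {t : ℕ} (hK : K ≤ W)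
    (ht : d W + r ≤ d K + r * t) (S : Finset G) :
    d W + r ≤ d (K ⊓ S.inf fun g => ρ g K) + r * (t * (S.card + 1)) := by
  classical
  induction S using Finset.induction_on with
  | empty => simpa using ht
  | insert g S hg ih =>
    have hmod := hd.modular (K ⊓ S.inf fun g => ρ g K) (ρ g K)
    have hle : d ((K ⊓ S.inf fun g => ρ g K) ⊔ ρ g K) ≤ d (W ⊔ ρ g W) :=
      hd.strictMono.monotone <|
        sup_le_sup (inf_le_left.trans hK) ((ρ g).monotone hK)
    have := hW g
    rw [hdρ] at hmod
    rw [Finset.inf_insert, Finset.card_insert_of_notMem hg,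
      inf_left_comm, inf_comm (ρ g K)]
    have : r * (t * (S.card + 1 + 1)) = r * (t * (S.card + 1)) + r * t := by ring
    omega

/-- Induction on the excess `e` of `K`: each decrease of `e` costs a factor `r + 2` in the bound
`r * (t - 1)` for the codimension of `K` in `W`. -/
theorem exists_invariant_step (hd : IsDimension d) [Group G] [Fintype G] (ρ : G → L ≃o L)
    (hρ : ∀ g h x, ρ (g * h) x = ρ g (ρ h x)) (hdρ : ∀ g x, d (ρ g x) = d x)
    {W : L} {r : ℕ} (hW : ∀ g, d (W ⊔ ρ g W) ≤ d W + r) (e : ℕ) (K : L) (t : ℕ) (hK : K ≤ W)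
    (hKe : ∀ g, d (K ⊔ ρ g W) ≤ d W + e) (ht : d W + r ≤ d K + r * t) :
    ∃ N, (∀ g, ρ g N = N) ∧ d (N ⊔ W) ≤ d W + r ∧
      d W + r ≤ d (W ⊓ N) + r * (t * (r + 2) ^ e) := by
  have hmono := hd.strictMono.monotone
  have hstable (e : ℕ) (K : L) (t : ℕ) (hK : K ≤ W) (hKe : ∀ g, d (K ⊔ ρ g W) ≤ d W + e)
      (ht : d W + r ≤ d K + r * t)
      (hstab : ∀ S : Finset G, S.card ≤ r + 1 →
        ∃ h, d W + e ≤ d ((K ⊓ S.inf fun g => ρ g K) ⊔ ρ h W)) :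
      ∃ N, (∀ g, ρ g N = N) ∧ d (N ⊔ W) ≤ d W + r ∧
        d W + r ≤ d (W ⊓ N) + r * (t * (r + 2) ^ e) := by
    obtain ⟨N, hKN, hN, hNW⟩ := exists_invariant_of_stable hd ρ hρ hdρ hW hK hKe hstab
    refine ⟨N, hN, hNW, ht.trans (add_le_add (hmono (le_inf hK hKN)) ?_)⟩
    exact Nat.mul_le_mul_left _ (Nat.le_mul_of_pos_right _ (by positivity))
  induction e generalizing K t with
  | zero =>
    exact hstable 0 K t hK hKe ht fun S _ => ⟨1, by
      rw [add_zero, ← hdρ 1 W]; exact hmono le_sup_right⟩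
  | succ e ih =>
    by_cases hstab : ∀ S : Finset G, S.card ≤ r + 1 →
        ∃ h, d W + (e + 1) ≤ d ((K ⊓ S.inf fun g => ρ g K) ⊔ ρ h W)
    · exact hstable _ K t hK hKe ht hstab
    push Not at hstab
    obtain ⟨S, hS, hlt⟩ := hstab
    have hcodim := codim_inf_le hd ρ hdρ hW hK ht S
    obtain ⟨N, hN, hNW, hle⟩ := ih (K ⊓ S.inf fun g => ρ g K) (t * (r + 2)) (inf_le_left.trans hK)
      (fun g => Nat.lt_succ_iff.mp (hlt g))
      (hcodim.trans (Nat.add_le_add_left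
        (Nat.mul_le_mul_left _ (Nat.mul_le_mul_left _ (by omega))) _))
    exact ⟨N, hN, hNW, hle.trans_eq (by ring)⟩

/-- An almost invariant element `W` is close to an invariant element `N`: the excess of `N` over
`W` is at most `r`, and the codimension of `W ⊓ N` in `W` is at most `r * ((r + 2) ^ r - 1)`. -/
theorem exists_invariant (hd : IsDimension d) [Group G] [Fintype G] (ρ : G → L ≃o L)
    (hρ : ∀ g h x, ρ (g * h) x = ρ g (ρ h x)) (hdρ : ∀ g x, d (ρ g x) = d x)
    {W : L} {r : ℕ} (hW : ∀ g, d (W ⊔ ρ g W) ≤ d W + r) :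
    ∃ N, (∀ g, ρ g N = N) ∧ d (N ⊔ W) ≤ d W + r ∧
      d W + r ≤ d (W ⊓ N) + r * (r + 2) ^ r := by
  simpa using exists_invariant_step hd ρ hρ hdρ hW r W 1 le_rfl hW (by simp)

end Lattice

/-! ### The Galois action on subspaces -/

section Galois

variable {k E : Type*} [Field k] [Field E] [Algebra k E] {n : ℕ}

/-- The coordinatewise, semilinear action of `σ` on `Eⁿ × Eⁿ`. -/
def galAct (σ : E ≃ₐ[k] E) : ((Fin n → E) × (Fin n → E)) ≃+ ((Fin n → E) × (Fin n → E)) where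
  toFun v := (σ ∘ v.1, σ ∘ v.2)
  invFun v := (σ.symm ∘ v.1, σ.symm ∘ v.2)
  left_inv v := by ext <;> simp
  right_inv v := by ext <;> simp
  map_add' v w := by ext <;> simp

theorem galAct_smul (σ : E ≃ₐ[k] E) (a : E) (v : (Fin n → E) × (Fin n → E)) :
    galAct σ (a • v) = σ a • galAct σ v := by
  ext <;> simp [galAct]

theorem galAct_symm (σ : E ≃ₐ[k] E) :
    (galAct (n := n) σ).symm = galAct σ.symm := by
  ext <;> rfl

theorem galAct_mul (σ τ : E ≃ₐ[k] E) (v : (Fin n → E) × (Fin n → E)) :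
    galAct (σ * τ) v = galAct σ (galAct τ v) := rfl

/-- The image `σ X` of a subspace `X`, encoded as the preimage of `X` under `σ⁻¹`. -/
def galMap (σ : E ≃ₐ[k] E) (X : Submodule E ((Fin n → E) × (Fin n → E))) :
    Submodule E ((Fin n → E) × (Fin n → E)) where
  carrier := {v | galAct σ.symm v ∈ X}
  add_mem' {v w} hv hw := by
    simp only [Set.mem_ofPred_eq, map_add] at *
    exact X.add_mem hv hw
  zero_mem' := by simp
  smul_mem' a v hv := by
    simp only [Set.mem_ofPred_eq, galAct_smul] at *
    exact X.smul_mem _ hv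

theorem mem_galMap {σ : E ≃ₐ[k] E} {X : Submodule E ((Fin n → E) × (Fin n → E))}
    {v : (Fin n → E) × (Fin n → E)} : v ∈ galMap σ X ↔ galAct σ.symm v ∈ X := Iff.rfl

/-- The action of `σ` on the lattice of subspaces of `Eⁿ × Eⁿ`. -/
def galIso (σ : E ≃ₐ[k] E) :
    Submodule E ((Fin n → E) × (Fin n → E)) ≃o Submodule E ((Fin n → E) × (Fin n → E)) where
  toFun := galMap σ
  invFun := galMap σ.symm
  left_inv X := by
    ext v
    simp only [mem_galMap, ← galAct_symm, AddEquiv.symm_symm, AddEquiv.symm_apply_apply]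
  right_inv X := by
    ext v
    simp only [mem_galMap, ← galAct_symm, AddEquiv.symm_symm, AddEquiv.apply_symm_apply]
  map_rel_iff' {X Y} := by
    refine ⟨fun h v hv => ?_, fun h v hv => h hv⟩
    have : galAct σ v ∈ galMap σ X := by
      rw [mem_galMap, ← galAct_symm, AddEquiv.symm_apply_apply]; exact hv
    have := h this
    change galAct σ v ∈ galMap σ Y at this
    rwa [mem_galMap, ← galAct_symm, AddEquiv.symm_apply_apply] at this

theorem galIso_mul (σ τ : E ≃ₐ[k] E) (X : Submodule E ((Fin n → E) × (Fin n → E))) :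
    galIso (σ * τ) X = galIso σ (galIso τ X) := rfl

theorem mem_galIso {σ : E ≃ₐ[k] E} {X : Submodule E ((Fin n → E) × (Fin n → E))}
    {v : (Fin n → E) × (Fin n → E)} : v ∈ galIso σ X ↔ galAct σ.symm v ∈ X := Iff.rfl

theorem finrank_galIso (σ : E ≃ₐ[k] E) (X : Submodule E ((Fin n → E) × (Fin n → E))) :
    Module.finrank E (galIso σ X) = Module.finrank E X := by
  let j : galIso σ X ≃+ X :=
    { toFun v := ⟨galAct σ.symm v, v.2⟩
      invFun v := ⟨galAct σ v, by
        rw [mem_galIso, ← galAct_symm, AddEquiv.symm_apply_apply]; exact v.2⟩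
      left_inv v := by
        ext1; simp only [← galAct_symm, AddEquiv.apply_symm_apply]
      right_inv v := by
        ext1; simp only [← galAct_symm, AddEquiv.symm_apply_apply]
      map_add' v w := by ext1; simp }
  exact congrArg Cardinal.toNat <|
    rank_eq_of_equiv_equiv σ.symm j σ.symm.bijective fun a v => Subtype.ext (galAct_smul _ _ _)

theorem isDimension_finrank :
    IsDimension fun X : Submodule E ((Fin n → E) × (Fin n → E)) => Module.finrank E X where
  strictMono _ _ h := Submodule.finrank_lt_finrank_of_lt h
  modular x y := Submodule.finrank_sup_add_finrank_inf_eq x y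

theorem finrank_graph (f : (Fin n → E) →ₗ[E] (Fin n → E)) : Module.finrank E f.graph = n := by
  rw [LinearMap.graph_eq_range_prod, LinearMap.finrank_range_of_inj
    (fun x y h => (Prod.ext_iff.mp h).1), Module.finrank_fin_fun]

/-- The sum of the graphs of `M` and `σ(M)` is contained in the sum of the graph of `M` and
`0 × range (σ(M) - M)`. -/
theorem finrank_graph_sup_le (M : Matrix (Fin n) (Fin n) E) (σ : E ≃ₐ[k] E) :
    Module.finrank E ↥(M.mulVecLin.graph ⊔ galIso σ M.mulVecLin.graph) ≤
      Module.finrank E M.mulVecLin.graph + (M.map σ - M).rank := by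
  have hle : M.mulVecLin.graph ⊔ galIso σ M.mulVecLin.graph ≤
      M.mulVecLin.graph ⊔
        (LinearMap.range (M.map σ - M).mulVecLin).map (LinearMap.inr E (Fin n → E) (Fin n → E)) := by
    refine sup_le le_sup_left ?_
    rintro ⟨x, y⟩ hxy
    rw [mem_galIso, LinearMap.mem_graph_iff] at hxy
    -- `(x, y)` lies on the graph of `σ(M)`.
    have hy : y = (M.map σ).mulVec x := by
      have h := congrArg (fun v => σ ∘ v) hxy
      have h1 : σ ∘ (galAct σ.symm (x, y)).2 = y := by ext i; simp [galAct]
      simp only [h1] at h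
      rw [h]
      ext i
      simp [galAct, Matrix.mulVec, dotProduct]
    rw [Submodule.mem_sup]
    refine ⟨(x, M.mulVec x), by simp, (0, (M.map σ - M).mulVec x), ?_, ?_⟩
    · exact ⟨_, ⟨x, rfl⟩, rfl⟩
    · rw [hy, Matrix.sub_mulVec]; simp
  refine (Submodule.finrank_mono hle).trans
    ((Submodule.finrank_add_le_finrank_add_finrank _ _).trans (Nat.add_le_add_left ?_ _))
  exact Submodule.finrank_map_le _ _

/-- Galois descent. Let `N₀` be the space of `k`-rational vectors of `N`, and choose a linear map `A`
over `k` with `(x, A x) ∈ N₀` for all `x` in the first projection of `N₀`. By the trace form of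
`E/k`, every `v ∈ N` is an `E`-linear combination of elements of `N₀`, so `(v.1, A v.1) ∈ N`. -/
theorem exists_linearMap_of_invariant [FiniteDimensional k E] [IsGalois k E]
    (N : Submodule E ((Fin n → E) × (Fin n → E))) (hN : ∀ σ : E ≃ₐ[k] E, galIso σ N = N) :
    ∃ A : Matrix (Fin n) (Fin n) k, ∀ v ∈ N,
      (v.1, (A.map (algebraMap k E)).mulVec v.1) ∈ N := by
  classical
  let c : (Fin n → k) →ₗ[k] (Fin n → E) := (Algebra.linearMap k E).compLeft (Fin n)
  let N₀ : Submodule k ((Fin n → k) × (Fin n → k)) :=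
    (N.restrictScalars k).comap (c.prodMap c)
  let p : N₀ →ₗ[k] (Fin n → k) := (LinearMap.fst k _ _).comp N₀.subtype
  obtain ⟨s, hs⟩ := p.rangeRestrict.exists_rightInverse_of_surjective p.range_rangeRestrict
  obtain ⟨T, hT⟩ := (((LinearMap.snd k _ _).comp N₀.subtype).comp s).exists_extend
  have hT' : ∀ v ∈ N₀, (v.1, T v.1) ∈ N₀ := fun v hv => by
    let x : LinearMap.range p := ⟨v.1, ⟨⟨v, hv⟩, rfl⟩⟩
    have h1 : T v.1 = (s x).1.2 := LinearMap.congr_fun hT x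
    have h2 : (s x).1.1 = v.1 := congrArg Subtype.val (LinearMap.congr_fun hs x)
    rw [h1, ← h2]
    exact (s x).2
  have hact : ∀ σ : E ≃ₐ[k] E, ∀ v ∈ N, galAct σ v ∈ N := fun σ v hv => by
    have := hN σ.symm ▸ hv
    rwa [mem_galIso, AlgEquiv.symm_symm] at this
  -- The coordinatewise trace is the sum over the Galois group, so it maps `N` to `N₀`.
  let tr (v : (Fin n → E) × (Fin n → E)) : (Fin n → k) × (Fin n → k) :=
    (fun i => Algebra.trace k E (v.1 i), fun i => Algebra.trace k E (v.2 i))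
  have htr : ∀ v ∈ N, tr v ∈ N₀ := fun v hv => by
    have : (c.prodMap c) (tr v) = ∑ σ : E ≃ₐ[k] E, galAct σ v := by
      ext i <;> simp [c, tr, galAct, trace_eq_sum_automorphisms, Prod.fst_sum, Prod.snd_sum]
    change (c.prodMap c) (tr v) ∈ N
    rw [this]
    exact N.sum_mem fun σ _ => hact σ v hv
  let b := Module.finBasis k E
  let B := Algebra.traceForm k E
  have hB : B.Nondegenerate := traceForm_nondegenerate k E
  have hexp : ∀ a : E, a = ∑ i, algebraMap k E (Algebra.trace k E (b i * a)) * B.dualBasis hB b i :=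
    fun a => by
    conv_lhs => rw [← (B.dualBasis hB b).sum_repr a]
    simp only [LinearMap.BilinForm.dualBasis_repr_apply, Algebra.smul_def, B,
      Algebra.traceForm_apply, mul_comm a]
  -- Applied to the coordinates of `v`, `hexp` writes `v` in terms of the rational vectors
  -- `tr (b i • v)`.
  refine ⟨LinearMap.toMatrix' T, fun v hv => ?_⟩
  have hA : ∀ x : Fin n → k,
      ((LinearMap.toMatrix' T).map (algebraMap k E)).mulVec (c x) = c (T x) := fun x => by
    conv_rhs => rw [← LinearMap.toMatrix'_mulVec T x]
    ext i
    simp only [c, Matrix.mulVec, dotProduct, Matrix.map_apply, LinearMap.compLeft_apply,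
      Function.comp_apply, Algebra.linearMap_apply, map_sum, map_mul]
  have hv1 : v.1 = ∑ i, B.dualBasis hB b i • c (tr (b i • v)).1 := by
    ext j
    rw [hexp (v.1 j)]
    simp [c, tr, mul_comm]
  have : (v.1, ((LinearMap.toMatrix' T).map (algebraMap k E)).mulVec v.1) =
      ∑ i, B.dualBasis hB b i • (c.prodMap c) ((tr (b i • v)).1, T (tr (b i • v)).1) := by
    rw [Prod.ext_iff]
    refine ⟨by simpa [Prod.fst_sum] using hv1, ?_⟩
    simp only [Prod.snd_sum, Prod.smul_snd, LinearMap.prodMap_apply, ← hA, ← Matrix.mulVec_smul,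
      ← Matrix.mulVec_sum]
    rw [← hv1]
  rw [this]
  exact N.sum_mem fun i _ => N.smul_mem _ (hT' _ (htr _ (N.smul_mem _ hv)))

/-! ### Rank estimates -/

theorem finrank_range_le (f : (Fin n → E) →ₗ[E] (Fin n → E)) (P : Submodule E (Fin n → E)) :
    Module.finrank E (LinearMap.range f) + Module.finrank E P ≤ Module.finrank E (P.map f) + n := by
  have h1 := f.finrank_range_add_finrank_ker
  have h2 := (f.domRestrict P).finrank_range_add_finrank_ker
  rw [LinearMap.range_domRestrict] at h2
  have h3 : Module.finrank E (LinearMap.ker (f.domRestrict P)) ≤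
      Module.finrank E (LinearMap.ker f) := by
    rw [← Submodule.finrank_map_subtype_eq P]
    refine Submodule.finrank_mono ?_
    rintro _ ⟨x, hx, rfl⟩
    exact hx
  rw [Module.finrank_fin_fun] at h1
  omega

/-- On the projection `P` of `W ⊓ N`, where `W` is the graph of `M`, the map `M - A` takes values in
`{z | (0, z) ∈ N}`. This space meets `W` trivially, so its dimension is at most the excess `r` of `N`
over `W`; the codimension of `P` is that of `W ⊓ N` in `W`, which is at most `c - r`. -/
theorem rank_sub_le_of_graph (M A : Matrix (Fin n) (Fin n) E)
    (N : Submodule E ((Fin n → E) × (Fin n → E)))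
    (hA : ∀ v ∈ N, (v.1, A.mulVec v.1) ∈ N) {r c : ℕ}
    (h1 : Module.finrank E ↥(N ⊔ M.mulVecLin.graph) ≤ Module.finrank E M.mulVecLin.graph + r)
    (h2 : Module.finrank E M.mulVecLin.graph + r ≤
      Module.finrank E ↥(M.mulVecLin.graph ⊓ N) + c) :
    (M - A).rank ≤ c := by
  set W := M.mulVecLin.graph
  let P := (W ⊓ N).map (LinearMap.fst E (Fin n → E) (Fin n → E))
  have hP : Module.finrank E P = Module.finrank E ↥(W ⊓ N) := by
    have hinj : Function.Injective
        ((LinearMap.fst E (Fin n → E) (Fin n → E)).domRestrict (W ⊓ N)) := by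
      rintro ⟨x, hx, _⟩ ⟨y, hy, _⟩ h
      have h' : x.1 = y.1 := h
      have hx' : x.2 = M.mulVecLin x.1 := hx
      have hy' : y.2 = M.mulVecLin y.1 := hy
      exact Subtype.ext (Prod.ext h' (by rw [hx', hy', h']))
    rw [← LinearMap.finrank_range_of_inj hinj, LinearMap.range_domRestrict]
  let Z := (P.map (M - A).mulVecLin)
  let Z' := Z.map (LinearMap.inr E (Fin n → E) (Fin n → E))
  have hZ : Module.finrank E Z' = Module.finrank E Z :=
    (Submodule.equivMapOfInjective _ LinearMap.inr_injective Z).finrank_eq.symm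
  have hZN : Z' ≤ N := by
    rintro _ ⟨_, ⟨_, ⟨v, ⟨hvW, hvN⟩, rfl⟩, rfl⟩, rfl⟩
    have := N.sub_mem hvN (hA v hvN)
    replace hvW : v.2 = M.mulVecLin v.1 := hvW
    convert this using 1
    ext i <;> simp [hvW]
  have hZW : Z' ⊓ W = ⊥ := by
    rw [eq_bot_iff]
    rintro _ ⟨⟨z, _, rfl⟩, hw⟩
    have : z = 0 := by simpa using (LinearMap.mem_graph_iff _ _).1 hw
    simp [this]
  have h3 := Submodule.finrank_sup_add_finrank_inf_eq Z' W
  rw [hZW, finrank_bot] at h3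
  have h4 : Module.finrank E ↥(Z' ⊔ W) ≤ Module.finrank E ↥(N ⊔ W) :=
    Submodule.finrank_mono (sup_le_sup_right hZN _)
  have h5 := finrank_range_le (M - A).mulVecLin P
  have h6 : Module.finrank E W = n := finrank_graph _
  change Module.finrank E (LinearMap.range (M - A).mulVecLin) ≤ c
  change _ ≤ Module.finrank E Z + n at h5
  omega

/-- It suffices that `(r + 2) ^ j ≤ (j + 1) * (r + 1) ^ j` for `j ≤ r`, which follows by induction
from `(j + 1) * (r + 2) ≤ (j + 2) * (r + 1)`. -/
theorem mul_add_two_pow_le (r : ℕ) : r * (r + 2) ^ r ≤ r * (2 + (r + 1) ^ (r + 1)) := by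
  have h : ∀ j ≤ r, (r + 2) ^ j ≤ (j + 1) * (r + 1) ^ j := by
    intro j hj
    induction j with
    | zero => simp
    | succ j ih =>
      calc (r + 2) ^ (j + 1) = (r + 2) ^ j * (r + 2) := pow_succ _ _
        _ ≤ (j + 1) * (r + 1) ^ j * (r + 2) := Nat.mul_le_mul_right _ (ih (by omega))
        _ = (r + 1) ^ j * ((j + 1) * (r + 2)) := by ring
        _ ≤ (r + 1) ^ j * ((j + 1 + 1) * (r + 1)) := Nat.mul_le_mul_left _ (by nlinarith)
        _ = _ := by ring
  refine Nat.mul_le_mul_left _ ((h r le_rfl).trans ?_)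
  rw [pow_succ]
  linarith

/-- The analogue of the theorem for arbitrary square matrices, without symmetry and without
restriction on the characteristic. -/
theorem almost_invariant_matrix [FiniteDimensional k E] [IsGalois k E] {r : ℕ}
    (M : Matrix (Fin n) (Fin n) E) (hG : ∀ σ : E ≃ₐ[k] E, (M.map σ - M).rank ≤ r) :
    ∃ A : Matrix (Fin n) (Fin n) k,
      (M - A.map (algebraMap k E)).rank ≤ r * (2 + (r + 1) ^ (r + 1)) := by
  obtain ⟨N, hN, h1, h2⟩ := exists_invariant (isDimension_finrank (E := E) (n := n))
    (galIso (k := k)) galIso_mul finrank_galIso (W := M.mulVecLin.graph) (r := r)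
    fun σ => (finrank_graph_sup_le M σ).trans (Nat.add_le_add_left (hG σ) _)
  obtain ⟨A, hA⟩ := exists_linearMap_of_invariant N hN
  exact ⟨A, (rank_sub_le_of_graph M _ N hA h1 h2).trans (mul_add_two_pow_le r)⟩

theorem rank_add_transpose_le (D : Matrix (Fin n) (Fin n) E) :
    (D + D.transpose).rank ≤ 2 * D.rank := by
  have hle : LinearMap.range (D + D.transpose).mulVecLin ≤
      LinearMap.range D.mulVecLin ⊔ LinearMap.range D.transpose.mulVecLin := by
    rintro _ ⟨x, rfl⟩
    rw [Matrix.mulVecLin_add]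
    exact Submodule.add_mem_sup ⟨x, rfl⟩ ⟨x, rfl⟩
  have h := (Submodule.finrank_mono hle).trans (Submodule.finrank_add_le_finrank_add_finrank _ _)
  change (D + D.transpose).rank ≤ D.rank + D.transpose.rank at h
  rw [Matrix.rank_transpose] at h
  omega

end Galois

/-- Let `E/k` be a finite Galois extension with group `G`, `char k ≠ 2`, and let a
quadratic form on `V = V₀ ⊗ E` (`V₀ = k^n`) be given by its symmetric Gram matrix `M`
over `E`.  If `rk(σ(q) − q) ≤ r` for all `σ ∈ G`, then there exists a quadratic form
`q₀` on `V₀`, i.e. a symmetric matrix `N` over `k`, with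
`rk_E(q − q₀) ≤ 2r(2 + (r+1)^(r+1))`. -/
theorem almost_invariant_quadratic_form {k E : Type*} [Field k] [Field E] [Algebra k E]
    [FiniteDimensional k E] [IsGalois k E] (hchar : ringChar k ≠ 2)
    {n r : ℕ} (M : Matrix (Fin n) (Fin n) E) (hM : M.IsSymm)
    (hG : ∀ σ : E ≃ₐ[k] E, (M.map σ - M).rank ≤ r) :
    ∃ N : Matrix (Fin n) (Fin n) k, N.IsSymm ∧
      (M - N.map (algebraMap k E)).rank ≤ 2 * r * (2 + (r + 1) ^ (r + 1)) := by
  obtain ⟨A, hA⟩ := almost_invariant_matrix M hG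
  have h2 : (2 : k) ≠ 0 := Ring.two_ne_zero hchar
  have h2' : (2 : E) ≠ 0 := by
    rw [← map_ofNat (algebraMap k E) 2]
    exact (map_ne_zero _).2 h2
  -- The symmetrisation of `A`; as `M` is symmetric, its error is half of `D + Dᵀ`, `D = M - A`.
  refine ⟨(2 : k)⁻¹ • (A + A.transpose), ?_, ?_⟩
  · simp [Matrix.IsSymm, add_comm]
  set D := M - A.map (algebraMap k E) with hD
  have hhalf : M - ((2 : k)⁻¹ • (A + A.transpose)).map (algebraMap k E) =
      (D + D.transpose) * Matrix.scalar (Fin n) (2 : E)⁻¹ := by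
    ext i j
    have hs := hM.apply i j
    simp [hD, hs, map_ofNat (algebraMap k E) 2]
    field_simp
    ring
  rw [hhalf]
  calc _ ≤ (D + D.transpose).rank := Matrix.rank_mul_le_left _ _
    _ ≤ 2 * D.rank := rank_add_transpose_le D
    _ ≤ _ := by rw [mul_assoc]; exact Nat.mul_le_mul_left _ hA
end

section
/- Suppose q_0² + Σ_{i=1}^r q_i q'_i = p_0² + Σ_{i=1}^r p_i p'_i for quadrics over an algebraically closed field of characteristic ≠ 2, and that every combination a_0 q_0 + Σ_i(a_i q_i + a'_i q'_i) with a_0² + 4Σ_i a_i a'_i = 0 and (a_0, a_●, a'_●) ≠ 0 has slice rank greater than c(r,r−1,0) + C(r,0), where c(r,s,0) = 2^s·r + 2^{s−1}(s−2) and C(r,0) = (r−1)2^r + r·2^{r−1} + 1. Then there is a subspace L of linear forms of dimension at most D(r,0) + c(r+1,r,0), with D(r,0) = (r−1)(2^r−1) + r·2^{r−1}, and a linear change of (q_0,...,q_r,q'_1,...,q'_r) preserving the quadratic form a_0² + 4Σ_{i=1}^r a_i a'_i, after which q_0 ≡ p_0, q_i ≡ p_i, q'_i ≡ p'_i mod (L).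 -/
/-!
Write `N = 2r + 1`. Over an algebraically closed field of characteristic ≠ 2 both sides of the
quartic identity become sums of `N` squares: there are symmetric bilinear maps
`e, h : kⁿ × kⁿ → kᴺ` with `e(x,x)·e(x,x) = h(x,x)·h(x,x)` for all `x`, whose coordinates are
combinations of the `q`'s and of the `p`'s (`exists_coords`, `exists_bilin_coords`). A combination
with `a₀² + 4∑ aᵢa'ᵢ = 0` becomes `a·e(x,x)` with `a` isotropic. The goal becomes an isometry of
`kᴺ` carrying `h(x,x)` to `e(x,x)` for `x` in a subspace of codimension at most
`N(N-1)/2 = r(2r+1)`, which is `core`.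

`core` is an induction on `N`. Suppose `e(x,x)` is not isotropic for some `x`; scale `x` and
rotate so that `e(x,x) = h(x,x)` is the first basis vector. Expanding the identity at `x + ty`
(`polarization`) shows that `e(x,y)` and `h(x,y)` have the same first coordinate, and that
`e(x,x)·e(y,y) + 2 e(x,y)·e(x,y)` equals its analogue for `h`. So the `N - 1` linear conditions on
`y` which make the other coordinates of `e(x,y)` and `h(x,y)` agree force `e(y,y)` and `h(y,y)`
to have the same first coordinate; the remaining `N - 1` coordinates satisfy the same hypotheses
on this subspace. The codimensions add up to `(N-1) + (N-2) + ⋯ + 0`.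

If instead `e(x,x)` is always isotropic while `N ≥ 2`, put `a = e(x,x)` and suppose `a ≠ 0`. Then
`y ↦ e(x,y)` takes values in `a^⊥`, so `e(x,y)` is a multiple of `a` for `y` in a subspace of
codimension at most `N - 2`, and there `a·e(y,y) = -2 e(x,y)·e(x,y) = 0`. This contradicts the
lower bound on the slice rank of isotropic combinations, as does `e(x,x) = 0` for all `x`.

Slice rank and vanishing on subspaces are linked by `exists_linear_forms`: a polynomial that
vanishes on a linear subspace of codimension `c` lies in an ideal generated by `c` linear forms.
-/

open MvPolynomial

/-- `SliceRankLE f r`: the polynomial `f` lies in an ideal generated by `r` linear forms. -/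
def SliceRankLE {k : Type*} [Field k] {n : ℕ} (f : MvPolynomial (Fin n) k) (r : ℕ) : Prop :=
  ∃ l : Fin r → MvPolynomial (Fin n) k,
    (∀ i, (l i).IsHomogeneous 1) ∧ f ∈ Ideal.span (Set.range l)

/-- The slice rank: the minimal number of linear forms whose generated ideal contains `f`. -/
noncomputable def srk {k : Type*} [Field k] {n : ℕ} (f : MvPolynomial (Fin n) k) : ℕ :=
  sInf {r | SliceRankLE f r}

/-- The rank of a quadratic form: the rank of its associated symmetric matrix. -/
noncomputable def qrank {k : Type*} [Field k] {n : ℕ} (q : MvPolynomial (Fin n) k) : ℕ :=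
  (assocMatrix q).rank

/-- The quadratic form `a₀² + 4∑ aᵢa'ᵢ` on `k^{2r+1} = (Unit ⊕ (Fin r ⊕ Fin r) → k)`. -/
def psiForm {k : Type*} [Field k] {r : ℕ} (v : Unit ⊕ (Fin r ⊕ Fin r) → k) : k :=
  v (Sum.inl ()) ^ 2 + 4 * ∑ i, v (Sum.inr (Sum.inl i)) * v (Sum.inr (Sum.inr i))

/-- The linear map `k^{2r+1} →` quadrics sending the standard basis to `(q₀, q, q')`. -/
noncomputable def phiMap0 {k : Type*} [Field k] {n r : ℕ} (q₀ : MvPolynomial (Fin n) k)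
    (q q' : Fin r → MvPolynomial (Fin n) k) (w : Unit ⊕ (Fin r ⊕ Fin r) → k) :
    MvPolynomial (Fin n) k :=
  w (Sum.inl ()) • q₀ + ∑ j, w (Sum.inr (Sum.inl j)) • q j
    + ∑ j, w (Sum.inr (Sum.inr j)) • q' j


/-! ### Linear algebra and polarization -/

theorem finrank_inf_ker {k E F : Type*} [Field k] [AddCommGroup E] [Module k E]
    [FiniteDimensional k E] [AddCommGroup F] [Module k F]
    (φ : E →ₗ[k] F) (M : Submodule k E) :
    Module.finrank k M = Module.finrank k (M.map φ)
      + Module.finrank k (M ⊓ LinearMap.ker φ : Submodule k E) := by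
  have h := LinearMap.finrank_range_add_finrank_ker (φ.domRestrict M)
  rw [LinearMap.range_domRestrict, LinearMap.ker_domRestrict] at h
  rw [← h, ← Submodule.map_comap_subtype,
    Submodule.finrank_map_subtype_eq]

/-- The coefficients of `t` and `t²`, up to constant factors, in the identity `e·e = h·h` evaluated at `x + ty`. -/
theorem polarization {k E : Type*} [Field k] [IsAlgClosed k] (h2 : (2 : k) ≠ 0)
    [AddCommGroup E] [Module k E] {N : ℕ} (M : Submodule k E)
    (e h : E →ₗ[k] E →ₗ[k] (Fin N → k)) (he : ∀ x y, e x y = e y x)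
    (hh : ∀ x y, h x y = h y x)
    (heq : ∀ x ∈ M, e x x ⬝ᵥ e x x = h x x ⬝ᵥ h x x) {x y : E} (hx : x ∈ M) (hy : y ∈ M) :
    e x x ⬝ᵥ e x y = h x x ⬝ᵥ h x y ∧
    e x x ⬝ᵥ e y y + 2 * (e x y ⬝ᵥ e x y) = h x x ⬝ᵥ h y y + 2 * (h x y ⬝ᵥ h x y) := by
  have key : ∀ t : k, t * (e x x ⬝ᵥ e x y - h x x ⬝ᵥ h x y) * 4
      + t ^ 2 * 2 * ((e x x ⬝ᵥ e y y + 2 * (e x y ⬝ᵥ e x y))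
        - (h x x ⬝ᵥ h y y + 2 * (h x y ⬝ᵥ h x y)))
      + t ^ 3 * (e y y ⬝ᵥ e x y - h y y ⬝ᵥ h x y) * 4 = 0 := by
    intro t
    have h0 := heq _ hx
    have h1 := heq _ hy
    have h3 := heq _ (M.add_mem hx (M.smul_mem t hy))
    simp only [map_add, map_smul, LinearMap.add_apply, LinearMap.smul_apply, he y x, hh y x,
      dotProduct_add, add_dotProduct, smul_dotProduct, dotProduct_smul, smul_eq_mul] at h3
    rw [dotProduct_comm (e x y) (e x x), dotProduct_comm (e y y) (e x x),
      dotProduct_comm (e x y) (e y y), dotProduct_comm (h x y) (h x x),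
      dotProduct_comm (h y y) (h x x), dotProduct_comm (h x y) (h y y)] at h3
    linear_combination h3 - h0 - t ^ 4 * h1
  classical
  -- The values at `1`, `-1` and one more point separate the coefficients, also in characteristic 3.
  obtain ⟨s, hs⟩ := Infinite.exists_notMem_finset ({0, 1, -1} : Finset k)
  simp only [Finset.mem_insert, Finset.mem_singleton, not_or] at hs
  obtain ⟨hs0, hs1, hs2⟩ := hs
  have k1 := key 1
  have k2 := key (-1)
  have k3 := key s
  set u := e x x ⬝ᵥ e x y - h x x ⬝ᵥ h x y
  set v := (e x x ⬝ᵥ e y y + 2 * (e x y ⬝ᵥ e x y)) - (h x x ⬝ᵥ h y y + 2 * (h x y ⬝ᵥ h x y))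
    with hv
  set w := e y y ⬝ᵥ e x y - h y y ⬝ᵥ h x y
  have v0 : (2 * 2) * v = 0 := by linear_combination k1 + k2
  have v0 : v = 0 := by simpa [h2] using v0
  have hu : (2 * 2 * s * (s - 1) * (s + 1)) * u = 0 := by
    rw [v0] at k1 k3
    linear_combination s ^ 3 * k1 - k3
  have hs3 : s + 1 ≠ 0 := fun h => hs2 (eq_neg_of_add_eq_zero_left h)
  have hu : u = 0 := by simpa [h2, hs0, sub_ne_zero.2 hs1, hs3] using hu
  exact ⟨sub_eq_zero.1 hu, sub_eq_zero.1 v0⟩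

/-- A unit vector is moved to the first basis vector by a self-adjoint involution, namely the
reflection in `a - b` or minus the reflection in `a + b`, where `b` is that basis vector. Over a
field that is not ordered `a - b` may be isotropic without being zero, which is why both are
needed. -/
theorem exists_reflection {k : Type*} [Field k] (h2 : (2 : k) ≠ 0) {N : ℕ}
    (a : Fin (N + 1) → k) (ha : a ⬝ᵥ a = 1) :
    ∃ R : (Fin (N + 1) → k) →ₗ[k] (Fin (N + 1) → k),
      (∀ u v, R u ⬝ᵥ v = u ⬝ᵥ R v) ∧ (∀ v, R (R v) = v) ∧ R a = Pi.single 0 1 := by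
  have refl : ∀ w : Fin (N + 1) → k, w ⬝ᵥ w ≠ 0 → 
      ∃ R : (Fin (N + 1) → k) →ₗ[k] (Fin (N + 1) → k),
      (∀ u v, R u ⬝ᵥ v = u ⬝ᵥ R v) ∧ (∀ v, R (R v) = v) ∧
      ∀ v, R v = v - (2 / (w ⬝ᵥ w) * (w ⬝ᵥ v)) • w := by
    intro w hw
    refine ⟨LinearMap.id - (2 / (w ⬝ᵥ w)) • (dotProductBilin k k w).smulRight w, ?_, ?_, ?_⟩
    · intro u v
      simp [sub_dotProduct, dotProduct_sub, smul_dotProduct, dotProduct_smul, dotProduct_comm u w]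
      exact Or.inl (mul_comm _ _)
    · intro v
      ext i
      simp [dotProduct_sub, dotProduct_smul]
      field_simp
      ring
    · intro v
      ext i
      simp
      ring
  set b : Fin (N + 1) → k := Pi.single 0 1 with hb
  have hbb : b ⬝ᵥ b = 1 := by simp [hb]
  by_cases h : a ⬝ᵥ b = 1
  · have hw : (a + b) ⬝ᵥ (a + b) = 2 * 2 := by
      rw [dotProduct_add, add_dotProduct, add_dotProduct, dotProduct_comm b a, ha, hbb, h]; ring
    have hwa : (a + b) ⬝ᵥ a = 2 := by
      rw [add_dotProduct, dotProduct_comm b a, ha, h]; ring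
    obtain ⟨R, h1, h3, h4⟩ := refl (a + b) (by rw [hw]; simp [h2])
    refine ⟨-R, ?_, ?_, ?_⟩
    · intro u v; simp [h1]
    · intro v; simp [h3]
    · rw [LinearMap.neg_apply, h4, hw, hwa]
      have : (2 / (2 * 2) * 2 : k) = 1 := by field_simp
      rw [this]; simp
  · have h' : 1 - a ⬝ᵥ b ≠ 0 := fun h0 => h (sub_eq_zero.1 h0).symm
    have hw : (a - b) ⬝ᵥ (a - b) = 2 * (1 - a ⬝ᵥ b) := by
      rw [dotProduct_sub, sub_dotProduct, sub_dotProduct, dotProduct_comm b a, ha, hbb]; ring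
    have hwa : (a - b) ⬝ᵥ a = 1 - a ⬝ᵥ b := by
      rw [sub_dotProduct, dotProduct_comm b a, ha]
    obtain ⟨R, h1, h3, h4⟩ := refl (a - b) (by rw [hw]; simp [h2, h'])
    refine ⟨R, h1, h3, ?_⟩
    rw [h4, hw, hwa]
    have : (2 / (2 * (1 - a ⬝ᵥ b)) * (1 - a ⬝ᵥ b) : k) = 1 := by field_simp
    rw [this]; simp

/-! ### Two equal sums of squares of quadratic forms -/

/-- If two `kᴺ`-valued quadratic maps `x ↦ e x x` and `x ↦ h x x` have the same square length on
`M`, and no nonzero isotropic combination of the coordinates of `e` vanishes on a subspace of `M` of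
codimension less than `N(N-1)/2`, then on a subspace of `M` of codimension at most `N(N-1)/2` they
differ by an isometry of `kᴺ`. The isometry `A` acts on coefficient vectors, so it is the
adjoint of the one acting on values. -/
theorem core {k E : Type*} [Field k] [IsAlgClosed k] (h2 : (2 : k) ≠ 0)
    [AddCommGroup E] [Module k E] [FiniteDimensional k E] (N : ℕ) :
    ∀ (M : Submodule k E) (e h : E →ₗ[k] E →ₗ[k] (Fin N → k)),
    (∀ x y, e x y = e y x) → (∀ x y, h x y = h y x) →
    (∀ x ∈ M, e x x ⬝ᵥ e x x = h x x ⬝ᵥ h x x) →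
    (∀ a : Fin N → k, a ≠ 0 → a ⬝ᵥ a = 0 → ∀ M₀ ≤ M,
      Module.finrank k M < Module.finrank k M₀ + N.choose 2 → ∃ x ∈ M₀, a ⬝ᵥ e x x ≠ 0) →
    ∃ A : (Fin N → k) →ₗ[k] (Fin N → k), (∀ v, A v ⬝ᵥ A v = v ⬝ᵥ v) ∧
      ∃ M' ≤ M, Module.finrank k M ≤ Module.finrank k M' + N.choose 2 ∧
        ∀ x ∈ M', ∀ v, v ⬝ᵥ h x x = A v ⬝ᵥ e x x := by
  induction N with
  | zero =>
    intro M e h _ _ _ _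
    exact ⟨LinearMap.id, by simp, M, le_rfl, by simp, by simp [dotProduct]⟩
  | succ N ih =>
    intro M e h he hh heq hiso
    have hch : (N + 1).choose 2 = N + N.choose 2 := by
      rw [Nat.choose_succ_succ' N 1, Nat.choose_one_right]
    by_cases hne : ∃ x ∈ M, e x x ⬝ᵥ e x x ≠ 0
    · obtain ⟨x, hxM, hx1⟩ : ∃ x ∈ M, e x x ⬝ᵥ e x x = 1 := by
        obtain ⟨x, hxM, hx⟩ := hne
        obtain ⟨t, ht⟩ := IsAlgClosed.exists_pow_nat_eq (e x x ⬝ᵥ e x x)⁻¹ (n := 4) (by norm_num)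
        refine ⟨t • x, M.smul_mem t hxM, ?_⟩
        simp only [map_smul, LinearMap.smul_apply, smul_dotProduct, dotProduct_smul, smul_eq_mul]
        calc _ = t ^ 4 * (e x x ⬝ᵥ e x x) := by ring
          _ = 1 := by rw [ht, inv_mul_cancel₀ hx]
      obtain ⟨R, hR1, hR2, hR3⟩ := exists_reflection h2 (e x x) hx1
      obtain ⟨S, hS1, hS2, hS3⟩ := exists_reflection h2 (h x x) (by rw [← heq x hxM, hx1])
      have hRR : ∀ u v, R u ⬝ᵥ R v = u ⬝ᵥ v := fun u v => by rw [hR1, hR2]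
      have hSS : ∀ u v, S u ⬝ᵥ S v = u ⬝ᵥ v := fun u v => by rw [hS1, hS2]
      let e' : E →ₗ[k] E →ₗ[k] (Fin (N + 1) → k) := e.compr₂ R
      let h' : E →ₗ[k] E →ₗ[k] (Fin (N + 1) → k) := h.compr₂ S
      have e'_apply : ∀ x y, e' x y = R (e x y) := fun _ _ => rfl
      have h'_apply : ∀ x y, h' x y = S (h x y) := fun _ _ => rfl
      have heq' : ∀ x ∈ M, e' x x ⬝ᵥ e' x x = h' x x ⬝ᵥ h' x x := by
        intro x hx
        rw [e'_apply, h'_apply, hRR, hSS, heq x hx]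
      have pol := fun y (hy : y ∈ M) => polarization h2 M e' h' 
        (fun x y => by simp only [e'_apply, he x y]) (fun x y => by simp only [h'_apply, hh x y])
        heq' hxM hy
      have hex : e' x x = Pi.single 0 1 := hR3
      have hhx : h' x x = Pi.single 0 1 := hS3
      simp only [hex, hhx, single_dotProduct, one_mul] at pol
      let tl : (Fin (N + 1) → k) →ₗ[k] (Fin N → k) := LinearMap.funLeft k k Fin.succ
      have tl_apply : ∀ v i, tl v i = v (Fin.succ i) := fun _ _ => rfl
      have dot_succ : ∀ u v : Fin (N + 1) → k, u ⬝ᵥ v = u 0 * v 0 + tl u ⬝ᵥ tl v := by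
        intro u v
        simp [dotProduct, Fin.sum_univ_succ, tl_apply]
      let φ : E →ₗ[k] (Fin N → k) := tl ∘ₗ (e' x - h' x)
      -- The first coordinates of `e' x y` and `h' x y` agree on `M`; the others agree on `M₁`.
      let M₁ := M ⊓ LinearMap.ker φ
      have hM₁ : Module.finrank k M ≤ Module.finrank k M₁ + N := by
        have h3 := finrank_inf_ker φ M
        have h4 := Submodule.finrank_le (M.map φ)
        rw [Module.finrank_fin_fun] at h4
        change _ ≤ Module.finrank k (M ⊓ LinearMap.ker φ : Submodule k E) + N
        omega
      have hagree : ∀ y ∈ M₁, e' x y = h' x y := by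
        rintro y ⟨hyM, hy⟩
        have h3 : ∀ i, φ y i = 0 := fun i => by rw [LinearMap.mem_ker.1 hy]; rfl
        funext i
        refine Fin.cases (pol y hyM).1 (fun i => ?_) i
        exact sub_eq_zero.1 (h3 i)
      have h0 : ∀ y ∈ M₁, e' y y 0 = h' y y 0 := by
        intro y hy
        have := (pol y hy.1).2
        rw [hagree y hy] at this
        exact add_right_cancel this
      obtain ⟨A, hA, M', hM', hdim, hM'eq⟩ := ih M₁ (e'.compr₂ tl) (h'.compr₂ tl)
        (fun x y => by simp [e'_apply, he x y]) (fun x y => by simp [h'_apply, hh x y])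
        (by
          intro y hy
          have h3 := heq' y hy.1
          rw [dot_succ, dot_succ (h' y y), h0 y hy] at h3
          exact add_left_cancel h3)
        (by
          intro a ha haa M₀ hM₀ hlt
          let a' : Fin (N + 1) → k := Fin.cons 0 a
          have ha' : ∀ v, a' ⬝ᵥ v = a ⬝ᵥ tl v := by
            intro v
            rw [dot_succ]
            simp only [a', Fin.cons_zero, zero_mul, zero_add]
            rfl
          have ha'a' : a' ⬝ᵥ a' = 0 := by rw [ha', ← haa]; rfl
          obtain ⟨y, hy, hy1⟩ := hiso (R a')
            (by
              intro h3
              apply ha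
              have h4 : a' = 0 := by rw [← hR2 a', h3, map_zero]
              funext i
              exact congrFun h4 i.succ)
            (by rw [hRR, ha'a']) M₀ (hM₀.trans inf_le_left) (by omega)
          refine ⟨y, hy, ?_⟩
          rwa [hR1, ha'] at hy1)
      let B : (Fin (N + 1) → k) →ₗ[k] (Fin (N + 1) → k) :=
        LinearMap.pi (Fin.cons (LinearMap.proj 0) fun i => LinearMap.proj i ∘ₗ A ∘ₗ tl)
      have B0 : ∀ v, B v 0 = v 0 := fun v => rfl
      have Bt : ∀ v, tl (B v) = A (tl v) := fun v => rfl
      refine ⟨R ∘ₗ B ∘ₗ S, ?_, M', hM'.trans inf_le_left, by omega, ?_⟩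
      · intro v
        simp only [LinearMap.comp_apply]
        rw [hRR, dot_succ, B0, Bt, hA, ← dot_succ, hSS]
      · intro y hy v
        have h3 := hM'eq y hy (tl (S v))
        simp only [LinearMap.comp_apply]
        rw [hR1, ← hSS v, dot_succ, dot_succ (B (S v)), B0, Bt]
        rw [← e'_apply, ← h'_apply, h0 y (hM' hy)]
        exact congrArg _ h3
    · push Not at hne
      rcases Nat.eq_zero_or_pos N with rfl | hN
      · have hz : ∀ u : Fin (0 + 1) → k, u ⬝ᵥ u = 0 → u = 0 := by
          intro u hu
          funext i
          simpa [dotProduct, Fin.fin_one_eq_zero i] using hu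
        refine ⟨LinearMap.id, fun v => rfl, M, le_rfl, by omega, ?_⟩
        intro x hx v
        rw [hz _ (hne x hx), hz (h x x) (by rw [← heq x hx, hne x hx])]
        rfl
      · exfalso
        by_cases hx : ∃ x ∈ M, e x x ≠ 0
        · obtain ⟨x, hxM, hx0⟩ := hx
          have hxx := hne x hxM
          have pol := fun y (hy : y ∈ M) => polarization h2 M e 0 he (by simp)
            (by intro x hx; simp [hne x hx]) hxM hy
          simp only [LinearMap.zero_apply, dotProduct_zero, mul_zero, add_zero] at pol
          -- For `y` in `M₀` the vector `e x y` is a multiple of the isotropic vector `e x x`.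
          let M₀ := (M ⊓ LinearMap.ker (e x)) ⊔ k ∙ x
          have hM₀ : M₀ ≤ M := sup_le inf_le_left (by simpa using hxM)
          have hfr : Module.finrank k M₀ = Module.finrank k (M ⊓ LinearMap.ker (e x) : Submodule k E) + 1 := by
            have h3 := Submodule.finrank_sup_add_finrank_inf_eq (M ⊓ LinearMap.ker (e x)) (k ∙ x)
            have h4 : (M ⊓ LinearMap.ker (e x)) ⊓ (k ∙ x) = ⊥ := by
              rw [eq_bot_iff]
              rintro y ⟨⟨_, hy⟩, hy2⟩
              obtain ⟨t, rfl⟩ := Submodule.mem_span_singleton.1 hy2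
              have : t • e x x = 0 := by simpa using hy
              rcases smul_eq_zero.1 this with h5 | h5
              · simp [h5]
              · exact absurd h5 hx0
            rw [h4, finrank_bot, finrank_span_singleton (by rintro rfl; simp at hx0)] at h3
            exact h3
          -- The range of `e x` on `M` lies in the orthogonal complement of `e x x`.
          have hrk : Module.finrank k (M.map (e x)) < N + 1 := by
            refine lt_of_lt_of_eq (Submodule.finrank_lt ?_) (Module.finrank_fin_fun k)
            intro htop
            apply hx0
            apply dotProduct_eq_zero _
            intro w
            have : w ∈ M.map (e x) := by rw [htop]; trivial
            obtain ⟨y, hy, rfl⟩ := this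
            exact (pol y hy).1
          have hd := finrank_inf_ker (e x) M
          obtain ⟨y, hy, hyne⟩ := hiso (e x x) hx0 hxx M₀ hM₀ (by omega)
          apply hyne
          have h5 := (pol y (hM₀ hy)).2
          obtain ⟨z, ⟨_, hz⟩, w, hw, rfl⟩ := Submodule.mem_sup.1 hy
          obtain ⟨t, rfl⟩ := Submodule.mem_span_singleton.1 hw
          have h6 : e x (z + t • x) = t • e x x := by
            rw [map_add, LinearMap.mem_ker.1 hz, map_smul, zero_add]
          rw [h6] at h5
          simpa [hxx] using h5
        · push Not at hx
          obtain ⟨N, rfl⟩ := Nat.exists_eq_succ_of_ne_zero hN.ne'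
          obtain ⟨i, hi⟩ := IsAlgClosed.exists_pow_nat_eq (-1 : k) (n := 2) (by norm_num)
          obtain ⟨y, hy, hyne⟩ := hiso (Fin.cons 1 (Fin.cons i 0))
            (fun h0 => one_ne_zero (congrFun h0 0))
            (by simp [dotProduct, Fin.sum_univ_succ, ← pow_two, hi]) M le_rfl (by omega)
          exact hyne (by rw [hx y hy, dotProduct_zero])

/-! ### Polynomials, bilinear forms and subspaces -/

theorem exists_bilin {k : Type*} [Field k] (h2 : (2 : k) ≠ 0) {n : ℕ}
    (F : MvPolynomial (Fin n) k) (hF : F.IsHomogeneous 2) :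
    ∃ b : (Fin n → k) →ₗ[k] (Fin n → k) →ₗ[k] k, (∀ x y, b x y = b y x) ∧
      ∀ x, b x x = eval x F := by
  rw [F.as_sum]
  apply Finset.sum_induction _ (fun F : MvPolynomial (Fin n) k =>
    ∃ b : (Fin n → k) →ₗ[k] (Fin n → k) →ₗ[k] k, (∀ x y, b x y = b y x) ∧
      ∀ x, b x x = eval x F)
  · rintro F G ⟨b, h1, h3⟩ ⟨c, h4, h5⟩
    exact ⟨b + c, fun x y => by simp [h1 x y, h4 x y], fun x => by simp [h3, h5]⟩
  · exact ⟨0, by simp, by simp⟩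
  · intro d hd
    have hdeg : d.degree = 2 := by
      have := hF (mem_support_iff.1 hd)
      rwa [Pi.one_def, ← Finsupp.degree_eq_weight_one] at this
    have split : ∀ d : Fin n →₀ ℕ, d.degree ≠ 0 →
        ∃ i d', d = Finsupp.single i 1 + d' ∧ d.degree = 1 + d'.degree := by
      intro d hd
      obtain ⟨i, hi⟩ : ∃ i, d i ≠ 0 := by
        by_contra! h
        have : d = 0 := Finsupp.ext h
        simp [this] at hd
      have hi' : Finsupp.single i 1 ≤ d := by simpa [Nat.one_le_iff_ne_zero] using hi
      have e1 := add_tsub_cancel_of_le hi'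
      refine ⟨i, _, e1.symm, ?_⟩
      conv_lhs => rw [← e1]
      simp
    obtain ⟨i, j, rfl⟩ : ∃ i j, d = Finsupp.single i 1 + Finsupp.single j 1 := by
      obtain ⟨i, d', h1, h2⟩ := split d (by omega)
      obtain ⟨j, d'', h3, h4⟩ := split d' (by omega)
      have h5 : d'' = 0 := (Finsupp.degree_eq_zero_iff d'').1 (by omega)
      exact ⟨i, j, by rw [h1, h3, h5, add_zero]⟩
    let p : Fin n → ((Fin n → k) →ₗ[k] k) := fun i => LinearMap.proj i
    refine ⟨(2⁻¹ * coeff (Finsupp.single i 1 + Finsupp.single j 1) F) •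
      ((p i).smulRight (p j) + (p j).smulRight (p i)), ?_, ?_⟩
    · intro x y
      simp [p]; ring
    · intro x
      simp [p, eval_monomial, Finsupp.prod_add_index', pow_add]
      field_simp
      ring

/-- For a subspace of codimension `c` there are `c` linear forms generating an ideal that contains
every polynomial vanishing on the subspace: modulo that ideal each variable equals its composite with a
projection `π` onto the subspace, and `F ∘ π = 0`. -/
theorem exists_linear_forms {k : Type*} [Field k] [Infinite k] {n : ℕ}
    (M : Submodule k (Fin n → k)) :
    ∃ l : Fin (n - Module.finrank k M) → MvPolynomial (Fin n) k,
      (∀ i, (l i).IsHomogeneous 1) ∧ ∀ F : MvPolynomial (Fin n) k,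
        (∀ x ∈ M, eval x F = 0) → F ∈ Ideal.span (Set.range l) := by
  -- `lin` turns a functional on `kⁿ` into the corresponding linear form.
  let lin : Module.Dual k (Fin n → k) →ₗ[k] MvPolynomial (Fin n) k :=
    ∑ j, (LinearMap.proj (R := k) (φ := fun _ : Fin n => k) j).smulRight (X j) ∘ₗ 
      (LinearMap.pi fun j => LinearMap.applyₗ (Pi.single j (1 : k)))
  have lin_apply : ∀ w, lin w = ∑ j, w (Pi.single j 1) • (X j : MvPolynomial (Fin n) k) := by
    intro w; simp [lin]
  have hfr : Module.finrank k ((Fin n → k) ⧸ M) = n - Module.finrank k M := by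
    rw [Submodule.finrank_quotient, Module.finrank_fin_fun]
  let ψ : ((Fin n → k) ⧸ M) ≃ₗ[k] (Fin (n - Module.finrank k M) → k) :=
    LinearEquiv.ofFinrankEq _ _ (by rw [hfr, Module.finrank_fin_fun])
  let B : Fin (n - Module.finrank k M) → Module.Dual k (Fin n → k) :=
    fun i => LinearMap.proj i ∘ₗ ψ.toLinearMap ∘ₗ M.mkQ
  refine ⟨fun i => lin (B i), ?_, ?_⟩
  · intro i
    simp only [lin_apply]
    refine IsHomogeneous.sum _ _ _ fun j _ => ?_
    rw [smul_eq_C_mul]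
    simpa using (isHomogeneous_C _ _).mul (isHomogeneous_X k j)
  · intro F hF
    have hmem : ∀ w : Module.Dual k (Fin n → k), (∀ x ∈ M, w x = 0) →
        lin w ∈ Ideal.span (Set.range fun i => lin (B i)) := by
      intro w hw
      have : w = ∑ i, (M.liftQ w hw) (ψ.symm (Pi.single i 1)) • B i := by
        refine LinearMap.ext fun x => ?_
        have h3 : (M.mkQ x) = ψ.symm (∑ i, ψ (M.mkQ x) i • Pi.single i 1) := by
          rw [← pi_eq_sum_univ', LinearEquiv.symm_apply_apply]
        have h4 : w x = M.liftQ w hw (M.mkQ x) := rfl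
        rw [h4, h3, map_sum, map_sum]
        simp [B, mul_comm]
      rw [this, map_sum]
      refine Ideal.sum_mem _ fun i _ => ?_
      rw [map_smul, smul_eq_C_mul]
      exact Ideal.mul_mem_left _ _ (Ideal.subset_span ⟨i, rfl⟩)
    obtain ⟨T, hT⟩ := Submodule.exists_isCompl M
    let π : (Fin n → k) →ₗ[k] (Fin n → k) := M.subtype ∘ₗ Submodule.projectionOnto M T hT
    have hπM : ∀ x, π x ∈ M := fun x => Subtype.property _
    have hπ : ∀ x ∈ M, π x = x := fun x hx => by
      exact congrArg Subtype.val (Submodule.projectionOnto_apply_left hT ⟨x, hx⟩)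
    let Y : Fin n → MvPolynomial (Fin n) k := fun i => lin (LinearMap.proj i ∘ₗ π)
    have hXY : ∀ i, X i - Y i ∈ Ideal.span (Set.range fun i => lin (B i)) := by
      intro i
      have : X i = lin (LinearMap.proj i) := by
        rw [lin_apply]
        simp [Pi.single_apply]
      rw [this, ← map_sub]
      apply hmem
      intro x hx
      simp [hπ x hx]
    have h0 : bind₁ Y F = 0 := by
      apply MvPolynomial.funext
      intro x
      rw [map_zero]
      have hY : (fun i => eval x (Y i)) = π x := by
        funext i
        have hx : x = ∑ j, x j • (Pi.single j 1 : Fin n → k) := by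
          ext l
          simp [Pi.single_apply]
        conv_rhs => rw [hx]
        simp only [Y]
        rw [lin_apply]
        simp [smul_eval, mul_comm]
      have := hF _ (hπM x)
      rw [← hY] at this
      rw [← this]
      exact eval₂Hom_bind₁ _ _ _ _
    rw [← Ideal.Quotient.eq_zero_iff_mem]
    set I := Ideal.span (Set.range fun i => lin (B i))
    have h3 : Ideal.Quotient.mkₐ k I (bind₁ Y F) = Ideal.Quotient.mkₐ k I F := by
      rw [← AlgHom.comp_apply]
      congr 1
      apply MvPolynomial.algHom_ext
      intro i
      simp only [AlgHom.comp_apply, bind₁_X_right]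
      exact ((Ideal.Quotient.eq).2 (hXY i)).symm
    rw [h0, map_zero] at h3
    exact h3.symm

/-! ### Passage to sums of squares -/

/-- Coordinates in which the two quadratic forms are sums of squares: `T` acts on the values
`z = (z₀, z, z')` and turns `z₀² + ∑ zᵢz'ᵢ` into a sum of squares, `G` is its inverse transpose
acting on coefficient vectors and turns the dual form `a₀² + 4∑ aᵢa'ᵢ` into a sum of squares. -/
theorem exists_coords {k : Type*} [Field k] [IsAlgClosed k] (h2 : (2 : k) ≠ 0) (r : ℕ) :
    ∃ (G : (Unit ⊕ (Fin r ⊕ Fin r) → k) ≃ₗ[k] (Fin (2 * r + 1) → k))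
      (T : (Unit ⊕ (Fin r ⊕ Fin r) → k) →ₗ[k] (Fin (2 * r + 1) → k)),
      (∀ w, G w ⬝ᵥ G w = psiForm w) ∧ (∀ w z, G w ⬝ᵥ T z = w ⬝ᵥ z) ∧
      ∀ z, T z ⬝ᵥ T z = z (Sum.inl ()) ^ 2 + ∑ i, z (Sum.inr (Sum.inl i)) * z (Sum.inr (Sum.inr i)) := by
  -- `ι` is a square root of `-1`; the new coordinates are `zᵢ ± z'ᵢ` up to factors `ι` and `1/2`.
  obtain ⟨ι, hι⟩ := IsAlgClosed.exists_pow_nat_eq (-1 : k) (n := 2) (by norm_num)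
  have card : Fintype.card (Unit ⊕ (Fin r ⊕ Fin r)) = Fintype.card (Fin (2 * r + 1)) := by
    simp; omega
  let σ : Unit ⊕ (Fin r ⊕ Fin r) ≃ Fin (2 * r + 1) := Fintype.equivOfCardEq card
  let p : Unit ⊕ (Fin r ⊕ Fin r) → ((Unit ⊕ (Fin r ⊕ Fin r) → k) →ₗ[k] k) :=
    fun i => LinearMap.proj i
  let re : (Unit ⊕ (Fin r ⊕ Fin r) → k) →ₗ[k] (Fin (2 * r + 1) → k) :=
    LinearMap.funLeft k k σ.symm
  have hre : ∀ u v, re u ⬝ᵥ re v = u ⬝ᵥ v := fun u v =>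
    Equiv.sum_comp σ.symm fun i => u i * v i
  let G₀ : (Unit ⊕ (Fin r ⊕ Fin r) → k) →ₗ[k] (Unit ⊕ (Fin r ⊕ Fin r) → k) :=
    LinearMap.pi (Sum.elim (fun _ => p (Sum.inl ()))
      (Sum.elim (fun i => p (Sum.inr (Sum.inl i)) + p (Sum.inr (Sum.inr i)))
        fun i => ι • (p (Sum.inr (Sum.inr i)) - p (Sum.inr (Sum.inl i)))))
  let T₀ : (Unit ⊕ (Fin r ⊕ Fin r) → k) →ₗ[k] (Unit ⊕ (Fin r ⊕ Fin r) → k) :=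
    LinearMap.pi (Sum.elim (fun _ => p (Sum.inl ()))
      (Sum.elim (fun i => (2 : k)⁻¹ • (p (Sum.inr (Sum.inl i)) + p (Sum.inr (Sum.inr i))))
        fun i => (ι * 2⁻¹) • (p (Sum.inr (Sum.inl i)) - p (Sum.inr (Sum.inr i)))))
  have hGT : ∀ w z, re (G₀ w) ⬝ᵥ re (T₀ z) = w ⬝ᵥ z := by
    intro w z
    rw [hre]
    simp only [dotProduct, Fintype.sum_sum_type, G₀, T₀, p, ← Finset.sum_add_distrib]
    simp only [LinearMap.pi_apply, Sum.elim_inl, Sum.elim_inr, LinearMap.proj_apply,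
      LinearMap.add_apply, LinearMap.sub_apply, LinearMap.smul_apply, smul_eq_mul]
    congr 1
    refine Finset.sum_congr rfl fun i _ => ?_
    field_simp
    linear_combination (w (Sum.inr (Sum.inr i)) - w (Sum.inr (Sum.inl i))) *
      (z (Sum.inr (Sum.inl i)) - z (Sum.inr (Sum.inr i))) * hι
  have hinj : Function.Injective (re ∘ₗ G₀) := by
    rw [← LinearMap.ker_eq_bot, LinearMap.ker_eq_bot']
    intro w hw
    apply dotProduct_eq_zero
    intro z
    rw [← hGT, ← LinearMap.comp_apply re G₀, hw, zero_dotProduct]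
  refine ⟨LinearMap.linearEquivOfInjective (re ∘ₗ G₀) hinj (by simp; omega), re ∘ₗ T₀,
    ?_, fun w z => hGT w z, ?_⟩
  · intro w
    change re (G₀ w) ⬝ᵥ re (G₀ w) = _
    rw [hre]
    simp only [psiForm, dotProduct, Fintype.sum_sum_type, G₀, p, ← Finset.sum_add_distrib,
      Finset.mul_sum]
    simp only [LinearMap.pi_apply, Sum.elim_inl, Sum.elim_inr, LinearMap.proj_apply,
      LinearMap.add_apply, LinearMap.sub_apply, LinearMap.smul_apply, smul_eq_mul]
    congr 1
    · simp [pow_two]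
    refine Finset.sum_congr rfl fun i _ => ?_
    linear_combination (w (Sum.inr (Sum.inr i)) - w (Sum.inr (Sum.inl i))) ^ 2 * hι
  · intro z
    change re (T₀ z) ⬝ᵥ re (T₀ z) = _
    rw [hre]
    simp only [dotProduct, Fintype.sum_sum_type, T₀, p, ← Finset.sum_add_distrib]
    simp only [LinearMap.pi_apply, Sum.elim_inl, Sum.elim_inr, LinearMap.proj_apply,
      LinearMap.add_apply, LinearMap.sub_apply, LinearMap.smul_apply, smul_eq_mul]
    congr 1
    · simp [pow_two]
    refine Finset.sum_congr rfl fun i _ => ?_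
    field_simp
    linear_combination (z (Sum.inr (Sum.inl i)) - z (Sum.inr (Sum.inr i))) ^ 2 * hι

/-! ### Numerical bounds -/

theorem choose_two_odd (r : ℕ) : (2 * r + 1).choose 2 = r * (2 * r + 1) := by
  rw [Nat.choose_two_right, Nat.add_sub_cancel]
  exact Nat.div_eq_of_eq_mul_left two_pos (by ring)

theorem two_mul_le_two_pow {r : ℕ} (hr : 1 ≤ r) : 2 * (r : ℚ) ≤ 2 ^ r := by
  induction r, hr using Nat.le_induction with
  | base => norm_num
  | succ r hr ih =>
    have : (1 : ℚ) ≤ r := by exact_mod_cast hr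
    rw [pow_succ]; push_cast; linarith

/-- A slice rank above the assumed bound is at least `r(2r+1)`. For `r = 1` there is no
slack. -/
theorem srk_bound {r : ℕ} (hr : 1 ≤ r) :
    (((2 * r + 1).choose 2 : ℕ) : ℚ) ≤
      (2 : ℚ) ^ ((r : ℤ) - 1) * r + (2 : ℚ) ^ ((r : ℤ) - 2) * ((r : ℤ) - 3)
          + ((r : ℚ) - 1) * 2 ^ r + (r : ℚ) * 2 ^ ((r : ℤ) - 1) + 1 + 1 := by
  have h1 : (1 : ℚ) ≤ r := by exact_mod_cast hr
  rw [choose_two_odd, zpow_sub₀ two_ne_zero, zpow_sub₀ two_ne_zero, zpow_natCast]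
  push_cast
  have h3 := two_mul_le_two_pow hr
  have h4 : (0 : ℚ) ≤ (9 * r - 7) * (2 ^ r - 2 * r) :=
    mul_nonneg (by linarith) (by linarith)
  nlinarith

theorem dim_bound (r : ℕ) :
    (((2 * r + 1).choose 2 : ℕ) : ℚ) ≤
      ((r : ℚ) - 1) * (2 ^ r - 1) + (r : ℚ) * 2 ^ ((r : ℤ) - 1)
        + 2 ^ r * ((r : ℚ) + 1) + 2 ^ ((r : ℤ) - 1) * ((r : ℚ) - 2) := by
  rw [choose_two_odd, zpow_sub₀ two_ne_zero, zpow_natCast]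
  rcases Nat.eq_zero_or_pos r with rfl | hr
  · norm_num
  have h1 : (1 : ℚ) ≤ r := by exact_mod_cast hr
  push_cast
  have h3 := two_mul_le_two_pow hr
  have h4 : (0 : ℚ) ≤ (3 * r - 1) * (2 ^ r - 2 * r) :=
    mul_nonneg (by linarith) (by linarith)
  nlinarith [sq_nonneg (2 * (r : ℚ) - 1)]

/-! ### The theorem -/

theorem eval_phiMap0 {k : Type*} [Field k] {n r : ℕ} (q₀ : MvPolynomial (Fin n) k)
    (q q' : Fin r → MvPolynomial (Fin n) k) (w : Unit ⊕ (Fin r ⊕ Fin r) → k) (x : Fin n → k) :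
    eval x (phiMap0 q₀ q q' w) =
      w ⬝ᵥ fun j => eval x ((Sum.elim (fun _ => q₀) (Sum.elim q q') :
        Unit ⊕ (Fin r ⊕ Fin r) → MvPolynomial (Fin n) k) j) := by
  simp [phiMap0, dotProduct, Fintype.sum_sum_type, smul_eval, add_assoc]

theorem exists_bilin_coords {k : Type*} [Field k] (h2 : (2 : k) ≠ 0) {n r : ℕ}
    (T : (Unit ⊕ (Fin r ⊕ Fin r) → k) →ₗ[k] (Fin (2 * r + 1) → k))
    (f : Unit ⊕ (Fin r ⊕ Fin r) → MvPolynomial (Fin n) k) (hf : ∀ j, (f j).IsHomogeneous 2) :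
    ∃ e : (Fin n → k) →ₗ[k] (Fin n → k) →ₗ[k] (Fin (2 * r + 1) → k),
      (∀ x y, e x y = e y x) ∧ ∀ x, e x x = T fun j => eval x (f j) := by
  choose b hb hbf using fun j => exists_bilin h2 (f j) (hf j)
  refine ⟨LinearMap.mk₂ k (fun x y => T fun j => b j x y) ?_ ?_ ?_ ?_, ?_, ?_⟩
  · intro x x' y; rw [← map_add]; congr 1; funext j; simp
  · intro c x y; rw [← map_smul]; congr 1; funext j; simp
  · intro x y y'; rw [← map_add]; congr 1; funext j; simp
  · intro c x y; rw [← map_smul]; congr 1; funext j; simp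
  · intro x y; simp only [LinearMap.mk₂_apply, hb _ x y]
  · intro x; simp only [LinearMap.mk₂_apply, hbf]

/-- Suppose `q₀² + ∑ qᵢq'ᵢ = p₀² + ∑ pᵢp'ᵢ` for quadrics over an algebraically closed
field of characteristic ≠ 2, and every nonzero combination `a₀q₀ + ∑(aᵢqᵢ + a'ᵢq'ᵢ)`
with `a₀² + 4∑ aᵢa'ᵢ = 0` has slice rank greater than `c(r,r−1,0) + C(r,0)`, where
`c(r,s,0) = 2^s·r + 2^{s−1}(s−2)` and `C(r,0) = (r−1)2^r + r·2^{r−1} + 1`.  Then there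
is a space `L` of at most `D(r,0) + c(r+1,r,0)` linear forms, with
`D(r,0) = (r−1)(2^r−1) + r·2^{r−1}`, and a linear change `A` of
`(q₀, q₁,...,q_r, q'₁,...,q'_r)` preserving the form `a₀² + 4∑ aᵢa'ᵢ`, after which
`q₀ ≡ p₀`, `qᵢ ≡ pᵢ`, `q'ᵢ ≡ p'ᵢ` mod `(L)`. -/
theorem quad_decomposition_uniqueness_with_square {k : Type*} [Field k] [IsAlgClosed k]
    (hchar : ringChar k ≠ 2) {n r : ℕ}
    (q₀ p₀ : MvPolynomial (Fin n) k) (q q' p p' : Fin r → MvPolynomial (Fin n) k)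
    (hq₀ : q₀.IsHomogeneous 2) (hp₀ : p₀.IsHomogeneous 2)
    (hq : ∀ i, (q i).IsHomogeneous 2) (hq' : ∀ i, (q' i).IsHomogeneous 2)
    (hp : ∀ i, (p i).IsHomogeneous 2) (hp' : ∀ i, (p' i).IsHomogeneous 2)
    (heq : q₀ ^ 2 + ∑ i, q i * q' i = p₀ ^ 2 + ∑ i, p i * p' i)
    (hsrk : ∀ (a₀ : k) (a a' : Fin r → k),
      a₀ ^ 2 + 4 * ∑ i, a i * a' i = 0 → ¬ (a₀ = 0 ∧ a = 0 ∧ a' = 0) →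
      ((2 : ℚ) ^ ((r : ℤ) - 1) * r + (2 : ℚ) ^ ((r : ℤ) - 2) * ((r : ℤ) - 3)
          + ((r : ℚ) - 1) * 2 ^ r + (r : ℚ) * 2 ^ ((r : ℤ) - 1) + 1 <
        (srk (a₀ • q₀ + ∑ i, (a i • q i + a' i • q' i)) : ℚ))) :
    ∃ d : ℕ, ((d : ℚ) ≤ ((r : ℚ) - 1) * (2 ^ r - 1) + (r : ℚ) * 2 ^ ((r : ℤ) - 1)
        + 2 ^ r * ((r : ℚ) + 1) + 2 ^ ((r : ℤ) - 1) * ((r : ℚ) - 2)) ∧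
      ∃ L : Fin d → MvPolynomial (Fin n) k, (∀ i, (L i).IsHomogeneous 1) ∧
        ∃ A : (Unit ⊕ (Fin r ⊕ Fin r) → k) →ₗ[k] (Unit ⊕ (Fin r ⊕ Fin r) → k),
          (∀ v, psiForm (A v) = psiForm v) ∧
          p₀ - phiMap0 q₀ q q' (A (Pi.single (Sum.inl ()) 1)) ∈ Ideal.span (Set.range L) ∧
          ∀ i : Fin r,
            p i - phiMap0 q₀ q q' (A (Pi.single (Sum.inr (Sum.inl i)) 1)) ∈
              Ideal.span (Set.range L) ∧
            p' i - phiMap0 q₀ q q' (A (Pi.single (Sum.inr (Sum.inr i)) 1)) ∈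
              Ideal.span (Set.range L) := by
  
  have h2 : (2 : k) ≠ 0 := Ring.two_ne_zero hchar
  obtain ⟨G, T, hG, hGT, hT⟩ := exists_coords (k := k) h2 r
  let qs : Unit ⊕ (Fin r ⊕ Fin r) → MvPolynomial (Fin n) k :=
    Sum.elim (fun _ => q₀) (Sum.elim q q')
  let ps : Unit ⊕ (Fin r ⊕ Fin r) → MvPolynomial (Fin n) k :=
    Sum.elim (fun _ => p₀) (Sum.elim p p')
  obtain ⟨e, he, heq'⟩ := exists_bilin_coords h2 T qs (by rintro (_ | _ | _) <;> simp [qs, *])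
  obtain ⟨h, hh, hheq⟩ := exists_bilin_coords h2 T ps (by rintro (_ | _ | _) <;> simp [ps, *])
  have hphi : ∀ w x, eval x (phiMap0 q₀ q q' w) = G w ⬝ᵥ e x x := by
    intro w x
    rw [heq', hGT, eval_phiMap0]
  have hphi' : ∀ w x, eval x (phiMap0 p₀ p p' w) = G w ⬝ᵥ h x x := by
    intro w x
    rw [hheq, hGT, eval_phiMap0]
  obtain ⟨A, hA, M, -, hM, hAM⟩ := core h2 (2 * r + 1) ⊤ e h he hh
    (by
      intro x _
      rw [heq', hheq, hT, hT]
      simpa [qs, ps] using congrArg (eval x) heq)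
    (by
      intro a ha haa M₀ _ hlt
      by_contra! hcon
      obtain ⟨w, rfl⟩ := G.surjective a
      have hw : w ≠ 0 := by rintro rfl; simp at ha
      have hψ : psiForm w = 0 := by rw [← hG, haa]
      have hr : 1 ≤ r := by
        rcases Nat.eq_zero_or_pos r with rfl | hr
        · exfalso
          apply hw
          funext i
          rcases i with i | i | i
          · simpa [psiForm] using hψ
          · exact i.elim0
          · exact i.elim0
        · exact hr
      have hs := hsrk (w (Sum.inl ())) (fun i => w (Sum.inr (Sum.inl i)))
        (fun i => w (Sum.inr (Sum.inr i))) hψ (by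
          rintro ⟨h3, h4, h5⟩
          apply hw
          funext i
          rcases i with i | i | i
          · exact h3
          · exact congrFun h4 i
          · exact congrFun h5 i)
      obtain ⟨l, hl, hlF⟩ := exists_linear_forms M₀
      have hle : srk (w (Sum.inl ()) • q₀ + ∑ i, (w (Sum.inr (Sum.inl i)) • q i +
          w (Sum.inr (Sum.inr i)) • q' i)) ≤ n - Module.finrank k M₀ := by
        refine Nat.sInf_le ⟨l, hl, hlF _ fun x hx => ?_⟩
        rw [Finset.sum_add_distrib, ← add_assoc]
        exact (hphi w x).trans (hcon x hx)
      rw [finrank_top, Module.finrank_fin_fun] at hlt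
      have hlt' : n - Module.finrank k M₀ + 1 ≤ (2 * r + 1).choose 2 := by
        have := (2 * r + 1).choose_pos (k := 2) (by omega)
        omega
      have h6 : (((n - Module.finrank k M₀ : ℕ) : ℚ) + 1) ≤ ((2 * r + 1).choose 2 : ℕ) := by
        exact_mod_cast hlt'
      have h7 := srk_bound hr
      have h8 : ((srk (w (Sum.inl ()) • q₀ + ∑ i, (w (Sum.inr (Sum.inl i)) • q i +
          w (Sum.inr (Sum.inr i)) • q' i)) : ℕ) : ℚ) ≤ (n - Module.finrank k M₀ : ℕ) := by
        exact_mod_cast hle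
      linarith)
  rw [finrank_top, Module.finrank_fin_fun] at hM
  obtain ⟨l, hl, hlF⟩ := exists_linear_forms M
  have hmem : ∀ w, phiMap0 p₀ p p' w -
      phiMap0 q₀ q q' ((G.symm.toLinearMap ∘ₗ A ∘ₗ G.toLinearMap) w) ∈
      Ideal.span (Set.range l) := by
    intro w
    apply hlF
    intro x hx
    rw [map_sub, hphi, hphi']
    simp [hAM x hx]
  refine ⟨n - Module.finrank k M, le_trans ?_ (dim_bound r), l, hl,
    G.symm.toLinearMap ∘ₗ A ∘ₗ G.toLinearMap, ?_, ?_, fun i => ⟨?_, ?_⟩⟩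
  · have : n - Module.finrank k M ≤ (2 * r + 1).choose 2 := by omega
    exact_mod_cast this
  · intro v
    simp [← hG, hA]
  · have := hmem (Pi.single (Sum.inl ()) 1)
    rwa [show phiMap0 p₀ p p' (Pi.single (Sum.inl ()) 1) = p₀ by simp [phiMap0]] at this
  · have := hmem (Pi.single (Sum.inr (Sum.inl i)) 1)
    rwa [show phiMap0 p₀ p p' (Pi.single (Sum.inr (Sum.inl i)) 1) = p i by
      simp [phiMap0, Pi.single_apply]] at this
  · have := hmem (Pi.single (Sum.inr (Sum.inr i)) 1)
    rwa [show phiMap0 p₀ p p' (Pi.single (Sum.inr (Sum.inr i)) 1) = p' i by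
      simp [phiMap0, Pi.single_apply]] at this
end
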